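/- arXiv:2204.10468 — 2 statements merged into one kernel-verified Lean document; each statement's English description precedes it below -/
import Mathlib

section
/- Let R = ℤ[√2]. Then g_R(2) = 5: every binary quadratic form over R that is a sum of finitely many squares of linear forms over R is a sum of 5 squares of linear forms over R, and there exists a binary quadratic form over R that is a sum of finitely many squares of linear forms over R but is not a sum of 4 squares of linear forms over R. -/
/-!
The upper bound rests on two facts about `R = ℤ[√2]`.

*Three squares.* Every totally nonnegative `t` in the order `ℤ[2√2]` is a sum of three squares
in `R` (`sum3_of_TN`). Dividing out factors `2 = (√2)²` leaves three kinds of norm to treat. If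
`r = k N(t) - 1` is positive and odd and `-k t̄` is a square modulo `r`, then `t` is a diagonal
entry of a totally positive definite unimodular ternary matrix with diagonal in `ℤ[2√2]`
(`sum3_of_sqMod`), and by reduction theory every such matrix is the Gram matrix of three vectors
of `R³` (`UniForm.isGram`). A suitable `r` comes from the theorem of Dirichlet on primes in
arithmetic progressions, the square condition from quadratic reciprocity; when `N(t) = 8m²`, it comes from
the behaviour of `2 + √2` modulo primes `p ≡ 7` modulo `16`.

*Quaternions.* A maximal order of the Hamilton quaternions over `ℚ(√2)` is Euclidean
(`exists_near`), so an element whose reduced norm is divisible by a totally positive `α` has a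
left factor of reduced norm `α` (`exists_left_factor`). When `α` is odd and lies in `ℤ[2√2]`, a
unit of the order moves the factors into the quaternions with coordinates in `R`.

Let a form `αx² + 2βxy + γy²` be positive semidefinite at both real places, with `α` and `γ` in
`ℤ[2√2]` and `α` odd. Write `αγ - β²` as a sum of three squares; this gives a quaternion with
real part `β` and reduced norm `αγ`. Its factorisation with norms `α` and `γ` exhibits the form
as a sum of four squares (`four_squares`). Now take any sum of squares of linear forms
`aᵢx + bᵢy`. If all `aᵢ`, `bᵢ` are divisible by `√2`, the form is divided by `2`. Otherwise some
coefficient, say `aᵢ`, is odd; either the leading coefficient of the form is odd, or it becomes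
odd after subtracting `(aᵢx + bᵢy)²`. In both cases five squares suffice (`five_squares`).

For the lower bound, consider the form `(4 + 2√2)x² + 2√2 xy + (8 + 2√2)y²`. The only way to
write `4 + 2√2` as a sum of four squares is `(1 + √2)² + 1² + 0² + 0²`, up to order and signs,
and a congruence rules out a matching choice of the coefficients of `y` (`not_four`).
-/

/-- The binary quadratic form `α x² + β x y + γ y²` over a commutative ring `R` is a sum of
`n` squares of linear forms over `R`. -/
def IsSumOfLinSq {R : Type*} [CommRing R] (n : ℕ) (α β γ : R) : Prop :=
  ∃ a b : Fin n → R,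
    α = ∑ i, a i ^ 2 ∧ β = 2 * ∑ i, a i * b i ∧ γ = ∑ i, b i ^ 2

/-! ### Arithmetic of `ℤ[√2]` -/

/-- The element `√2` of `ℤ[√2]`. -/
def s2 : Zsqrtd 2 := ⟨0, 1⟩

/-- The embedding of `ℤ[√2]` into `ℝ` with `√2 ↦ √2`. -/
noncomputable def emb₁ : Zsqrtd 2 →+* ℝ :=
  Zsqrtd.lift ⟨√2, by norm_num⟩

/-- The embedding of `ℤ[√2]` into `ℝ` with `√2 ↦ -√2`. -/
noncomputable def emb₂ : Zsqrtd 2 →+* ℝ :=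
  Zsqrtd.lift ⟨-√2, by norm_num⟩

lemma emb₁_apply (t : Zsqrtd 2) : emb₁ t = t.re + t.im * √2 := by
  simp [emb₁]

lemma emb₂_apply (t : Zsqrtd 2) : emb₂ t = t.re - t.im * √2 := by
  simp [emb₂, sub_eq_add_neg]

lemma norm_eq (t : Zsqrtd 2) : t.norm = t.re ^ 2 - 2 * t.im ^ 2 := by
  rw [Zsqrtd.norm_def]; ring

lemma emb_mul (t : Zsqrtd 2) : emb₁ t * emb₂ t = (t.norm : ℝ) := by
  rw [emb₁_apply, emb₂_apply, norm_eq]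
  have h : √2 ^ 2 = (2 : ℝ) := by norm_num
  push_cast
  linear_combination (-(t.im : ℝ) ^ 2) * h

lemma emb_add (t : Zsqrtd 2) : emb₁ t + emb₂ t = 2 * (t.re : ℝ) := by
  rw [emb₁_apply, emb₂_apply]; ring

/-- Totally nonnegative elements of `ℤ[√2]`. -/
def TN (t : Zsqrtd 2) : Prop := 0 ≤ emb₁ t ∧ 0 ≤ emb₂ t

/-- Totally positive elements of `ℤ[√2]`. -/
def TP (t : Zsqrtd 2) : Prop := 0 < emb₁ t ∧ 0 < emb₂ t

lemma norm_ne_zero {t : Zsqrtd 2} (h : t ≠ 0) : t.norm ≠ 0 := by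
  intro h0
  rw [norm_eq] at h0
  apply h
  by_cases hi : t.im = 0
  · have : t.re = 0 := by
      rw [hi] at h0
      have : t.re ^ 2 = 0 := by linarith
      exact pow_eq_zero_iff (two_ne_zero) |>.1 this
    ext <;> simp [*]
  · exfalso
    have h2 : IsSquare (2 : ℚ) := by
      refine ⟨(t.re : ℚ) / t.im, ?_⟩
      have : (t.im : ℚ) ≠ 0 := by exact_mod_cast hi
      field_simp
      have : (t.re : ℚ) ^ 2 - 2 * t.im ^ 2 = 0 := by exact_mod_cast h0
      linarith
    have : ¬ IsSquare (2 : ℚ) := by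
      rw [show (2 : ℚ) = ((2 : ℕ) : ℚ) by norm_num, Rat.isSquare_natCast_iff]
      exact Nat.prime_two.not_isSquare
    exact this h2

lemma emb₁_inj {t : Zsqrtd 2} (h : emb₁ t = 0) : t = 0 := by
  by_contra h0
  have := emb_mul t
  rw [h, zero_mul] at this
  exact norm_ne_zero h0 (by exact_mod_cast this.symm)

lemma emb₂_inj {t : Zsqrtd 2} (h : emb₂ t = 0) : t = 0 := by
  by_contra h0
  have := emb_mul t
  rw [h, mul_zero] at this
  exact norm_ne_zero h0 (by exact_mod_cast this.symm)

instance : NoZeroDivisors (Zsqrtd 2) where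
  eq_zero_or_eq_zero_of_mul_eq_zero {a b} h := by
    have : emb₁ a * emb₁ b = 0 := by rw [← map_mul, h, map_zero]
    rcases mul_eq_zero.1 this with h | h
    · exact Or.inl (emb₁_inj h)
    · exact Or.inr (emb₁_inj h)

instance : IsDomain (Zsqrtd 2) := NoZeroDivisors.to_isDomain _

lemma TN.add {a b : Zsqrtd 2} (ha : TN a) (hb : TN b) : TN (a + b) := by
  simp only [TN, map_add] at *
  exact ⟨add_nonneg ha.1 hb.1, add_nonneg ha.2 hb.2⟩

lemma TP.tn {a : Zsqrtd 2} (ha : TP a) : TN a := ⟨ha.1.le, ha.2.le⟩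

lemma TN.tp {a : Zsqrtd 2} (ha : TN a) (h : a ≠ 0) : TP a :=
  ⟨lt_of_le_of_ne ha.1 fun h' => h (emb₁_inj h'.symm),
    lt_of_le_of_ne ha.2 fun h' => h (emb₂_inj h'.symm)⟩

lemma TP.ne_zero {a : Zsqrtd 2} (ha : TP a) : a ≠ 0 := by
  rintro rfl
  have := ha.1
  simp at this

lemma TP.add_tn {a b : Zsqrtd 2} (ha : TP a) (hb : TN b) : TP (a + b) := by
  simp only [TN, TP, map_add] at *
  exact ⟨add_pos_of_pos_of_nonneg ha.1 hb.1, add_pos_of_pos_of_nonneg ha.2 hb.2⟩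

lemma TP.mul {a b : Zsqrtd 2} (ha : TP a) (hb : TP b) : TP (a * b) := by
  simp only [TP, map_mul] at *
  exact ⟨mul_pos ha.1 hb.1, mul_pos ha.2 hb.2⟩

lemma TN_sq (a : Zsqrtd 2) : TN (a ^ 2) := by
  simp only [TN, map_pow]
  exact ⟨sq_nonneg _, sq_nonneg _⟩

lemma TP_sq {a : Zsqrtd 2} (h : a ≠ 0) : TP (a ^ 2) := (TN_sq a).tp (pow_ne_zero 2 h)

lemma TP.of_mul {a b : Zsqrtd 2} (ha : TP a) (hb : TP (a * b)) : TP b := by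
  simp only [TP, map_mul] at *
  exact ⟨(mul_pos_iff_of_pos_left ha.1).1 hb.1, (mul_pos_iff_of_pos_left ha.2).1 hb.2⟩

lemma TP.norm_pos {a : Zsqrtd 2} (ha : TP a) : 0 < a.norm := by
  have := emb_mul a
  have h : (0 : ℝ) < a.norm := by rw [← this]; exact mul_pos ha.1 ha.2
  exact_mod_cast h

lemma TP.re_pos {a : Zsqrtd 2} (ha : TP a) : 0 < a.re := by
  have := emb_add a
  have h : (0 : ℝ) < a.re := by linarith [ha.1, ha.2]
  exact_mod_cast h

lemma TP_iff {a : Zsqrtd 2} : TP a ↔ 0 < a.re ∧ 0 < a.norm := by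
  refine ⟨fun h => ⟨h.re_pos, h.norm_pos⟩, fun ⟨h1, h2⟩ => ?_⟩
  have h3 := emb_mul a
  have h4 := emb_add a
  have h1' : (0 : ℝ) < a.re := by exact_mod_cast h1
  have h2' : (0 : ℝ) < a.norm := by exact_mod_cast h2
  rw [← h3] at h2'
  rcases pos_and_pos_or_neg_and_neg_of_mul_pos h2' with h | h
  · exact h
  · exfalso; linarith [h.1, h.2]

lemma TP_star {a : Zsqrtd 2} (h : TP a) : TP (star a) := by
  rw [TP_iff] at *
  rw [norm_eq] at *
  simpa using h

lemma TP_int {n : ℤ} (h : 0 < n) : TP (n : Zsqrtd 2) := by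
  have : (0 : ℝ) < n := by exact_mod_cast h
  exact ⟨by simpa using this, by simpa using this⟩

lemma s2_sq : s2 * s2 = 2 := by ext <;> simp [s2]

lemma s2_ne : s2 ≠ 0 := by
  intro h
  have := congrArg Zsqrtd.im h
  simp [s2] at this

/-- Membership in the order `ℤ[2√2]`, the ring that contains all squares and all doubles. -/
def InR0 (t : Zsqrtd 2) : Prop := Even t.im

lemma InR0.add {a b : Zsqrtd 2} (ha : InR0 a) (hb : InR0 b) : InR0 (a + b) := by
  simpa [InR0] using Even.add ha hb

lemma InR0.neg {a : Zsqrtd 2} (ha : InR0 a) : InR0 (-a) := by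
  simpa [InR0] using ha

lemma InR0.sub {a b : Zsqrtd 2} (ha : InR0 a) (hb : InR0 b) : InR0 (a - b) := by
  rw [sub_eq_add_neg]; exact ha.add hb.neg

lemma InR0.mul {a b : Zsqrtd 2} (ha : InR0 a) (hb : InR0 b) : InR0 (a * b) := by
  simp only [InR0, Zsqrtd.im_mul] at *
  exact (hb.mul_left _).add (ha.mul_right _)

lemma InR0_sq (a : Zsqrtd 2) : InR0 (a ^ 2) := by
  refine ⟨a.re * a.im, ?_⟩
  rw [sq, Zsqrtd.im_mul]; ring

lemma InR0_two (a : Zsqrtd 2) : InR0 (2 * a) := by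
  refine ⟨a.im, ?_⟩
  rw [two_mul, Zsqrtd.im_add]

lemma InR0_star {a : Zsqrtd 2} (ha : InR0 a) : InR0 (star a) := by
  simpa [InR0] using ha

lemma InR0_int (n : ℤ) : InR0 (n : Zsqrtd 2) := by simp [InR0]

/-- An element of `ℤ[√2]` is divisible by `√2` exactly when its rational part is even. -/
lemma even_re_iff (a : Zsqrtd 2) : Even a.re ↔ ∃ b, a = s2 * b := by
  constructor
  · rintro ⟨c, hc⟩
    exact ⟨⟨a.im, c⟩, by ext <;> simp [s2, hc]; ring⟩
  · rintro ⟨b, rfl⟩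
    exact ⟨b.im, by simp [s2]; ring⟩

lemma InR0.norm_mod {a : Zsqrtd 2} (ha : InR0 a) :
    a.norm % 8 = 0 ∨ a.norm % 8 = 1 ∨ a.norm % 8 = 4 := by
  obtain ⟨c, hc⟩ := ha
  rw [norm_eq, hc, show a.re ^ 2 - 2 * (c + c) ^ 2 = a.re ^ 2 + 8 * (-c ^ 2) by ring,
    Int.add_mul_emod_self_left]
  have : a.re % 8 = 0 ∨ a.re % 8 = 1 ∨ a.re % 8 = 2 ∨ a.re % 8 = 3 ∨ a.re % 8 = 4 ∨
    a.re % 8 = 5 ∨ a.re % 8 = 6 ∨ a.re % 8 = 7 := by omega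
  rcases this with h | h | h | h | h | h | h | h <;> simp [pow_two, Int.mul_emod, h]

lemma sq_odd_mod {x : ℤ} (h : ¬ Even x) : x ^ 2 % 8 = 1 := by
  have : x % 8 = 1 ∨ x % 8 = 3 ∨ x % 8 = 5 ∨ x % 8 = 7 := by
    rw [Int.even_iff] at h; omega
  rcases this with h | h | h | h <;> simp [pow_two, Int.mul_emod, h]

/-- Cancelling an odd element in a divisibility by `2`. -/
lemma two_dvd_of_odd_mul {α x : Zsqrtd 2} (hα : ¬ Even α.re) (h : (2 : Zsqrtd 2) ∣ α * x) :
    (2 : Zsqrtd 2) ∣ x := by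
  obtain ⟨y, hy⟩ := h
  have h1 : star α * α = ((α.norm : ℤ) : Zsqrtd 2) := by
    rw [mul_comm, Zsqrtd.norm_eq_mul_conj]
  have h2 : α.norm % 2 = 1 := by
    have := Int.odd_iff.1 (Int.not_even_iff_odd.1 hα)
    rw [norm_eq]
    have h3 : α.re ^ 2 % 2 = 1 := by simp [pow_two, Int.mul_emod, this]
    omega
  have h3 : ((α.norm : ℤ) : Zsqrtd 2) * x = 2 * (star α * y) := by
    rw [← h1, mul_assoc, hy]; ring
  refine ⟨star α * y - ((α.norm / 2 : ℤ) : Zsqrtd 2) * x, ?_⟩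
  have h4 : α.norm = 2 * (α.norm / 2) + 1 := by omega
  rw [h4] at h3
  push_cast at h3
  linear_combination h3

/-! ### Reduction of binary forms over `ℤ[√2]` -/

/-- Multiplying a totally positive element by the square of a suitable unit brings its two
conjugates close to each other. -/
lemma exists_balanced (E : Zsqrtd 2) (hE : TP E) :
    ∃ u v : Zsqrtd 2, u * v = 1 ∧ 2 * |(u ^ 2 * E).im| ≤ (u ^ 2 * E).re := by
  induction h : E.re.toNat using Nat.strong_induction_on generalizing E with
  | _ n ih =>
    have hpos := hE.re_pos
    by_cases hb : 2 * |E.im| ≤ E.re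
    · exact ⟨1, 1, by simp, by simpa using hb⟩
    -- multiplication by `(1 ± √2)²` shrinks the rational part
    have key : ∀ w w' : Zsqrtd 2, w * w' = 1 → (w ^ 2 * E).re < E.re →
        ∃ u v : Zsqrtd 2, u * v = 1 ∧ 2 * |(u ^ 2 * E).im| ≤ (u ^ 2 * E).re := by
      intro w w' hw hlt
      have hw0 : w ≠ 0 := by rintro rfl; simp at hw
      have htp : TP (w ^ 2 * E) := (TP_sq hw0).mul hE
      have := htp.re_pos
      obtain ⟨u, v, huv, hu⟩ := ih (w ^ 2 * E).re.toNat (by omega) _ htp rfl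
      refine ⟨u * w, w' * v, ?_, ?_⟩
      · linear_combination huv + u * v * hw
      · rw [mul_pow, mul_assoc]; exact hu
    rcases le_total 0 E.im with h0 | h0
    · rw [abs_of_nonneg h0] at hb
      refine key ⟨1, -1⟩ ⟨-1, -1⟩ (by ext <;> simp) ?_
      simp [sq]; omega
    · rw [abs_of_nonpos h0] at hb
      refine key ⟨1, 1⟩ ⟨-1, 1⟩ (by ext <;> simp) ?_
      simp [sq]; omega

/-- The rational inequality behind the binary reduction step: the norm of `h + ξ²` is less than
`1` when `h = H₀ + H₁√2` is balanced of norm at most `1/7` and `ξ = s + v√2` is reduced. -/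
lemma reduction_ineq (H0 H1 s v : ℚ) (hH0 : 0 < H0) (hb : 2 * |H1| ≤ H0)
    (hk : 7 * (H0 ^ 2 - 2 * H1 ^ 2) ≤ 1) (hv : |v| ≤ 1 / 2)
    (hs : |s - 2 * (H1 / H0) * v| ≤ 1 / 2) :
    (H0 + (s ^ 2 + 2 * v ^ 2)) ^ 2 - 2 * (H1 + 2 * s * v) ^ 2 < 1 := by
  set ρ := H1 / H0 with hρ
  have hH1 : H1 = ρ * H0 := by rw [hρ]; field_simp
  have hρ1 : |2 * ρ| ≤ 1 := by
    rw [hρ, show 2 * (H1 / H0) = (2 * H1) / H0 by ring, abs_div, abs_of_pos hH0, div_le_one hH0,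
      abs_mul, abs_two]
    exact hb
  set e := s - 2 * ρ * v with he
  have hse : s = e + 2 * ρ * v := by rw [he]; ring
  rw [hH1] at hk ⊢
  set κ := H0 ^ 2 - 2 * (ρ * H0) ^ 2 with hκ
  have hρ2 : 4 * ρ ^ 2 ≤ 1 := by
    have := abs_le.1 hρ1; nlinarith
  have he2 : e ^ 2 ≤ 1 / 4 := by have := abs_le.1 hs; nlinarith
  have hv2 : v ^ 2 ≤ 1 / 4 := by have := abs_le.1 hv; nlinarith
  -- expand the norm and complete the square
  have hexp : (H0 + (s ^ 2 + 2 * v ^ 2)) ^ 2 - 2 * (ρ * H0 + 2 * s * v) ^ 2 =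
      κ + 2 * H0 * (e ^ 2 + 2 * (1 - 2 * ρ ^ 2) * v ^ 2) + (s ^ 2 - 2 * v ^ 2) ^ 2 := by
    rw [hκ, hse]; ring
  have hκρ : κ = H0 ^ 2 * (1 - 2 * ρ ^ 2) := by rw [hκ]; ring
  have hsv : (s ^ 2 - 2 * v ^ 2) ^ 2 ≤ 1 / 4 := by
    have hs1 : |s| ≤ 1 / 2 + |v| := by
      rw [hse]
      calc |e + 2 * ρ * v| ≤ |e| + |2 * ρ| * |v| := by
            rw [← abs_mul]; exact abs_add_le _ _
        _ ≤ 1 / 2 + 1 * |v| := by gcongr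
        _ = _ := by ring
    have h1 : s ^ 2 - 2 * v ^ 2 ≤ 1 / 2 := by
      have : s ^ 2 ≤ (1 / 2 + |v|) ^ 2 := by
        rw [← sq_abs s]; gcongr
      have h3 : |v| ^ 2 = v ^ 2 := sq_abs v
      nlinarith [abs_nonneg v]
    have h2 : -(1 / 2) ≤ s ^ 2 - 2 * v ^ 2 := by nlinarith [sq_nonneg s]
    nlinarith
  rw [hexp]
  set c := 1 - 2 * ρ ^ 2 with hc
  have hc1 : 1 / 2 ≤ c := by rw [hc]; linarith
  have hc2 : c ≤ 1 := by rw [hc]; nlinarith [sq_nonneg ρ]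
  have h4 : 2 * H0 * (e ^ 2 + 2 * c * v ^ 2) ≤ 2 * H0 * (1 / 4 + 2 * c * (1 / 4)) := by
    gcongr
  have h5 : 7 * (H0 ^ 2 * c) ≤ 1 := by rw [← hκρ]; exact hk
  have h6 : H0 * (1 / 2 + c) < 17 / 28 := by
    by_contra hcon
    push Not at hcon
    have h8 : (H0 * (1 / 2 + c)) ^ 2 ≥ (17 / 28) ^ 2 := by gcongr
    have h9 : (1 / 2 + c) ^ 2 ≤ 9 / 4 * c := by nlinarith
    nlinarith [sq_nonneg H0]
  linarith

/-- A binary form whose determinant is small compared with its first coefficient represents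
an element of smaller norm than that coefficient, by a vector `(c, u)` with `u` a unit. -/
lemma binary_reduction (α β γ : Zsqrtd 2) (hα : TP α) (hD : TP (α * γ - β ^ 2))
    (h7 : 7 * (α * γ - β ^ 2).norm ≤ α.norm ^ 2) :
    ∃ u v c : Zsqrtd 2, u * v = 1 ∧
      (u ^ 2 * γ + 2 * u * c * β + c ^ 2 * α).norm < α.norm := by
  set D := α * γ - β ^ 2 with hDdef
  have hn := hα.norm_pos
  set n := α.norm with hndef
  have hαα : α * star α = (n : Zsqrtd 2) := (Zsqrtd.norm_eq_mul_conj α).symm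
  obtain ⟨u, v, huv, hu⟩ := exists_balanced (D * star α ^ 2)
    (hD.mul (TP_sq (TP_star hα).ne_zero))
  have hu0 : u ≠ 0 := by rintro rfl; simp at huv
  set E := u ^ 2 * (D * star α ^ 2) with hE
  have hEp : TP E := (TP_sq hu0).mul (hD.mul (TP_sq (TP_star hα).ne_zero))
  have hunorm : u.norm ^ 2 = 1 := by
    have h1 : u.norm * v.norm = 1 := by rw [← Zsqrtd.norm_mul, huv]; simp
    rcases Int.isUnit_iff.1 (IsUnit.of_mul_eq_one _ h1) with h | h <;> rw [h] <;> norm_num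
  have hstar : (star α).norm = n := by rw [Zsqrtd.norm_conj]
  have hEn : E.norm = D.norm * n ^ 2 := by
    rw [hE]; simp only [sq, Zsqrtd.norm_mul, hstar]
    linear_combination (D.norm * n ^ 2) * hunorm
  set g := u * β * star α with hg
  have hnQ : (0 : ℚ) < n := by exact_mod_cast hn
  set H0 : ℚ := E.re / n ^ 2 with hH0
  set H1 : ℚ := E.im / n ^ 2 with hH1
  have hEre := hEp.re_pos
  have hH0p : 0 < H0 := by
    have : (0 : ℚ) < E.re := by exact_mod_cast hEre
    positivity
  set ci : ℤ := -round ((g.im : ℚ) / n) with hci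
  set w : ℚ := (g.im : ℚ) / n + ci with hw
  set cr : ℤ := -round ((g.re : ℚ) / n - 2 * (H1 / H0) * w) with hcr
  set σ : ℚ := (g.re : ℚ) / n + cr with hσ
  have hineq := reduction_ineq H0 H1 σ w hH0p ?_ ?_ ?_ ?_
  rotate_left
  · rw [hH0, hH1, abs_div, abs_of_pos (by positivity : (0 : ℚ) < (n : ℚ) ^ 2), ← mul_div_assoc]
    gcongr
    exact_mod_cast hu
  · have h1 : (E.norm : ℚ) = E.re ^ 2 - 2 * E.im ^ 2 := by rw [norm_eq]; push_cast; ring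
    have h2 : H0 ^ 2 - 2 * H1 ^ 2 = D.norm / n ^ 2 := by
      have : H0 ^ 2 - 2 * H1 ^ 2 = E.norm / n ^ 4 := by
        rw [h1, hH0, hH1]; field_simp
      rw [this, hEn]; push_cast; field_simp
    rw [h2, ← mul_div_assoc, div_le_one (by positivity)]
    exact_mod_cast h7
  · rw [hw, hci]
    have := abs_sub_round ((g.im : ℚ) / n)
    push_cast
    rwa [← sub_eq_add_neg]
  · have := abs_sub_round ((g.re : ℚ) / n - 2 * (H1 / H0) * w)
    rw [hσ, hcr]
    push_cast
    rwa [show (g.re : ℚ) / n + -(round ((g.re : ℚ) / n - 2 * (H1 / H0) * w) : ℚ) -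
      2 * (H1 / H0) * w = (g.re : ℚ) / n - 2 * (H1 / H0) * w -
        round ((g.re : ℚ) / n - 2 * (H1 / H0) * w) by ring]
  refine ⟨u, v, ⟨cr, ci⟩, huv, ?_⟩
  set c : Zsqrtd 2 := ⟨cr, ci⟩ with hc
  set γ' := u ^ 2 * γ + 2 * u * c * β + c ^ 2 * α with hγ'
  set W := g + (n : Zsqrtd 2) * c with hW
  have hid : (n : Zsqrtd 2) * star α * γ' = E + W ^ 2 := by
    rw [hE, hW, hg, hγ', hDdef, ← hαα]; ring
  have hnorm := congrArg Zsqrtd.norm hid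
  rw [Zsqrtd.norm_mul, Zsqrtd.norm_mul, hstar, Zsqrtd.norm_intCast] at hnorm
  have hWre : (W.re : ℚ) = n * σ := by
    rw [hW, hσ]; simp [hc]; field_simp
  have hWim : (W.im : ℚ) = n * w := by
    rw [hW, hw]; simp [hc]; field_simp
  have hEre' : (E.re : ℚ) = n ^ 2 * H0 := by rw [hH0]; field_simp
  have hEim' : (E.im : ℚ) = n ^ 2 * H1 := by rw [hH1]; field_simp
  have hQ : ((n : ℚ) ^ 3 * γ'.norm) < n ^ 4 := by
    have h1 : ((n : ℚ) ^ 3 * γ'.norm) = ((E + W ^ 2).norm : ℚ) := by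
      rw [← hnorm]; push_cast; ring
    rw [h1, norm_eq]
    have h2 : (((E + W ^ 2).re : ℤ) : ℚ) = n ^ 2 * (H0 + (σ ^ 2 + 2 * w ^ 2)) := by
      simp only [sq W, Zsqrtd.re_add, Zsqrtd.re_mul]
      push_cast
      rw [hWre, hWim, hEre']; ring
    have h3 : (((E + W ^ 2).im : ℤ) : ℚ) = n ^ 2 * (H1 + 2 * σ * w) := by
      simp only [sq W, Zsqrtd.im_add, Zsqrtd.im_mul]
      push_cast
      rw [hWre, hWim, hEim']; ring
    push_cast
    rw [h2, h3]
    have : (0 : ℚ) < n ^ 4 := by positivity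
    nlinarith
  have hQ2 : (γ'.norm : ℚ) < n := by
    have : (0 : ℚ) < n ^ 3 := by positivity
    nlinarith
  exact_mod_cast hQ2

/-! ### Unimodular ternary forms -/

/-- The symmetric matrix with diagonal `a, b, c` and off-diagonal entries `d, e, f` (in the
positions `12, 13, 23`) is the Gram matrix of three vectors of `ℤ[√2]³`. -/
def IsGram (a b c d e f : Zsqrtd 2) : Prop :=
  ∃ x y z : Fin 3 → Zsqrtd 2, x ⬝ᵥ x = a ∧ y ⬝ᵥ y = b ∧ z ⬝ᵥ z = c ∧
    x ⬝ᵥ y = d ∧ x ⬝ᵥ z = e ∧ y ⬝ᵥ z = f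

/-- The determinant of the symmetric matrix whose entries are listed as in `IsGram`. -/
def det₃ (a b c d e f : Zsqrtd 2) : Zsqrtd 2 :=
  a * b * c + 2 * d * e * f - a * f ^ 2 - b * e ^ 2 - c * d ^ 2

/-- Totally positive definite unimodular symmetric matrices with diagonal entries in `ℤ[2√2]`,
the entries being listed as in `IsGram`. -/
structure UniForm (a b c d e f : Zsqrtd 2) : Prop where
  ha : InR0 a
  hb : InR0 b
  hc : InR0 c
  pos₁ : TP a
  pos₂ : TP (a * b - d ^ 2)
  pos₃ : TP (det₃ a b c d e f)
  uni : (det₃ a b c d e f).norm = 1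

section
variable {a b c d e f : Zsqrtd 2}

lemma IsGram.swap₁₂ (h : IsGram b a c d f e) : IsGram a b c d e f := by
  obtain ⟨x, y, z, h1, h2, h3, h4, h5, h6⟩ := h
  exact ⟨y, x, z, h2, h1, h3, by rwa [dotProduct_comm], h6, h5⟩

lemma IsGram.swap₂₃ (h : IsGram a c b e d f) : IsGram a b c d e f := by
  obtain ⟨x, y, z, h1, h2, h3, h4, h5, h6⟩ := h
  exact ⟨x, z, y, h1, h3, h2, h5, h4, by rwa [dotProduct_comm]⟩

/-- Undoing the change of basis `y ↦ u y + k x`. -/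
lemma IsGram.of_op {u v : Zsqrtd 2} (k : Zsqrtd 2) (huv : u * v = 1)
    (h : IsGram a (u ^ 2 * b + 2 * u * k * d + k ^ 2 * a) c (u * d + k * a) e (u * f + k * e)) :
    IsGram a b c d e f := by
  obtain ⟨x, y, z, h1, h2, h3, h4, h5, h6⟩ := h
  refine ⟨x, v • (y - k • x), z, h1, ?_, h3, ?_, h5, ?_⟩
  · simp only [smul_dotProduct, dotProduct_smul, sub_dotProduct, dotProduct_sub, smul_eq_mul,
      dotProduct_comm y x, h1, h2, h4]
    linear_combination b * (u * v + 1) * huv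
  · simp only [dotProduct_smul, dotProduct_sub, smul_eq_mul, h1, h4]
    linear_combination d * huv
  · simp only [smul_dotProduct, sub_dotProduct, smul_eq_mul, h5, h6]
    linear_combination f * huv

/-- Undoing the change of basis `z ↦ u z + k y`. -/
lemma IsGram.of_op' {u v : Zsqrtd 2} (k : Zsqrtd 2) (huv : u * v = 1)
    (h : IsGram a b (u ^ 2 * c + 2 * u * k * f + k ^ 2 * b) d (u * e + k * d) (u * f + k * b)) :
    IsGram a b c d e f := by
  apply IsGram.swap₁₂
  apply IsGram.swap₂₃
  apply IsGram.of_op k huv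
  apply IsGram.swap₂₃
  exact h.swap₁₂

lemma IsGram.of_scale {u v : Zsqrtd 2} (huv : u * v = 1)
    (h : IsGram (u ^ 2 * a) b c (u * d) (u * e) f) : IsGram a b c d e f := by
  apply IsGram.swap₁₂
  apply IsGram.of_op 0 huv
  apply IsGram.swap₁₂
  simpa using h

lemma unit_sq_TP {u v : Zsqrtd 2} (huv : u * v = 1) : TP (u ^ 2) :=
  TP_sq (by rintro rfl; simp at huv)

lemma unit_norm_sq {u v : Zsqrtd 2} (huv : u * v = 1) : (u ^ 2).norm = 1 := by
  have h1 : u.norm * v.norm = 1 := by rw [← Zsqrtd.norm_mul, huv]; simp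
  rw [sq, Zsqrtd.norm_mul]
  rcases Int.isUnit_iff.1 (IsUnit.of_mul_eq_one _ h1) with h | h <;> rw [h] <;> norm_num

/-- A totally positive unit becomes `1`, and a totally positive element of norm `4` becomes `2`,
after multiplication by the square of a unit. -/
lemma exists_normalize {x : Zsqrtd 2} (m : ℕ) (hm : m = 1 ∨ m = 2) (hx : TP x)
    (h : x.norm = m ^ 2) : ∃ u v : Zsqrtd 2, u * v = 1 ∧ u ^ 2 * x = m := by
  obtain ⟨u, v, huv, hb⟩ := exists_balanced x hx
  refine ⟨u, v, huv, ?_⟩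
  set y := u ^ 2 * x with hy
  have hyn : y.norm = m ^ 2 := by rw [hy, Zsqrtd.norm_mul, unit_norm_sq huv, one_mul, h]
  have hyp : 0 < y.re := ((unit_sq_TP huv).mul hx).re_pos
  rw [norm_eq] at hyn
  have h4 : 4 * y.im ^ 2 ≤ y.re ^ 2 := by
    have := abs_nonneg y.im
    nlinarith [sq_abs y.im]
  have hre : y.re ≤ 2 := by
    rcases hm with rfl | rfl <;> push_cast at hyn <;> nlinarith
  have him : y.im ^ 2 ≤ 1 := by nlinarith
  have him1 : y.im ≤ 1 := by nlinarith
  have him2 : -1 ≤ y.im := by nlinarith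
  have : y.re = m ∧ y.im = 0 := by
    rcases hm with rfl | rfl <;> push_cast at hyn ⊢ <;>
    interval_cases h1 : y.re <;> interval_cases h2 : y.im <;> simp_all
  ext <;> simp [this.1, this.2]

lemma UniForm.swap₁₂ (h : UniForm a b c d e f) : UniForm b a c d f e := by
  have hd : det₃ b a c d f e = det₃ a b c d e f := by simp only [det₃]; ring
  refine ⟨h.hb, h.ha, h.hc, h.pos₁.of_mul ?_, by rw [mul_comm]; exact h.pos₂,
    by rw [hd]; exact h.pos₃, by rw [hd]; exact h.uni⟩
  rw [show a * b = (a * b - d ^ 2) + d ^ 2 by ring]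
  exact h.pos₂.add_tn (TN_sq d)

lemma UniForm.swap₂₃ (h : UniForm a b c d e f) : UniForm a c b e d f := by
  have hd : det₃ a c b e d f = det₃ a b c d e f := by simp only [det₃]; ring
  refine ⟨h.ha, h.hc, h.hb, h.pos₁, h.pos₂.of_mul ?_,
    by rw [hd]; exact h.pos₃, by rw [hd]; exact h.uni⟩
  rw [show (a * b - d ^ 2) * (a * c - e ^ 2) = a * det₃ a b c d e f + (a * f - d * e) ^ 2 by
    simp only [det₃]; ring]
  exact (h.pos₁.mul h.pos₃).add_tn (TN_sq _)

lemma UniForm.op (h : UniForm a b c d e f) {u v : Zsqrtd 2} (k : Zsqrtd 2) (huv : u * v = 1) :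
    UniForm a (u ^ 2 * b + 2 * u * k * d + k ^ 2 * a) c (u * d + k * a) e (u * f + k * e) := by
  have hd : det₃ a (u ^ 2 * b + 2 * u * k * d + k ^ 2 * a) c (u * d + k * a) e (u * f + k * e) =
    u ^ 2 * det₃ a b c d e f := by simp only [det₃]; ring
  refine ⟨h.ha, ?_, h.hc, h.pos₁, ?_, ?_, ?_⟩
  · refine (((InR0_sq _).mul h.hb).add ?_).add ((InR0_sq _).mul h.ha)
    rw [mul_assoc, mul_assoc]; exact InR0_two _
  · rw [show a * (u ^ 2 * b + 2 * u * k * d + k ^ 2 * a) - (u * d + k * a) ^ 2 =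
      u ^ 2 * (a * b - d ^ 2) by ring]
    exact (unit_sq_TP huv).mul h.pos₂
  · rw [hd]; exact (unit_sq_TP huv).mul h.pos₃
  · rw [hd, Zsqrtd.norm_mul, unit_norm_sq huv, h.uni, one_mul]

lemma UniForm.op' (h : UniForm a b c d e f) {u v : Zsqrtd 2} (k : Zsqrtd 2) (huv : u * v = 1) :
    UniForm a b (u ^ 2 * c + 2 * u * k * f + k ^ 2 * b) d (u * e + k * d) (u * f + k * b) :=
  ((h.swap₁₂.swap₂₃.op k huv).swap₂₃).swap₁₂

lemma UniForm.scale (h : UniForm a b c d e f) {u v : Zsqrtd 2} (huv : u * v = 1) :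
    UniForm (u ^ 2 * a) b c (u * d) (u * e) f := by
  simpa using (h.swap₁₂.op 0 huv).swap₁₂

/-- A totally positive definite unimodular ternary matrix whose first entry and leading
`2 × 2` minor are units is a Gram matrix. -/
lemma UniForm.isGram_of_units (h : UniForm a b c d e f) (h1 : a.norm = 1)
    (h2 : (a * b - d ^ 2).norm = 1) : IsGram a b c d e f := by
  obtain ⟨u, v, huv, hu⟩ := exists_normalize 1 (Or.inl rfl) h.pos₁ (by simpa using h1)
  have h := h.scale huv
  apply IsGram.of_scale huv
  have h2' : (u ^ 2 * a * b - (u * d) ^ 2).norm = 1 := by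
    rw [show u ^ 2 * a * b - (u * d) ^ 2 = u ^ 2 * (a * b - d ^ 2) by ring, Zsqrtd.norm_mul,
      unit_norm_sq huv, h2, one_mul]
  clear h1 h2
  revert h h2'
  generalize u * d = d
  generalize u * e = e
  rw [hu]
  intro h h2
  clear hu huv u v
  simp only [Nat.cast_one] at *
  have h := h.op (-d) (one_mul 1)
  apply IsGram.of_op (-d) (one_mul 1)
  have hb : 1 ^ 2 * b + 2 * 1 * -d * d + (-d) ^ 2 * 1 = 1 * b - d ^ 2 := by ring
  rw [hb] at h ⊢
  revert h h2
  generalize 1 * b - d ^ 2 = b'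
  generalize 1 * f + -d * e = f'
  rw [show 1 * d + -d * 1 = 0 by ring]
  intro h2 h
  clear hb
  have hp := h.swap₁₂.pos₁
  obtain ⟨u, v, huv, hu⟩ := exists_normalize 1 (Or.inl rfl) hp (by simpa using h2)
  have h := h.op 0 huv
  apply IsGram.of_op 0 huv
  revert h
  rw [show u ^ 2 * b' + 2 * u * 0 * 0 + 0 ^ 2 * 1 = 1 by simpa using hu]
  rw [show u * 0 + 0 * 1 = (0 : Zsqrtd 2) by ring]
  generalize u * f' + 0 * e = f''
  intro h
  -- subtract multiples of the first two vectors from the third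
  have h := (h.swap₂₃.op (-e) (one_mul 1)).swap₂₃
  apply IsGram.swap₂₃
  apply IsGram.of_op (-e) (one_mul 1)
  apply IsGram.swap₂₃
  revert h
  rw [show 1 * e + -e * 1 = 0 by ring, show 1 * f'' + -e * 0 = f'' by ring]
  generalize 1 ^ 2 * c + 2 * 1 * -e * e + (-e) ^ 2 * 1 = c'
  intro h
  have h := h.op' (-f'') (one_mul 1)
  apply IsGram.of_op' (-f'') (one_mul 1)
  revert h
  rw [show 1 * f'' + -f'' * 1 = 0 by ring, show 1 * 0 + -f'' * 0 = (0 : Zsqrtd 2) by ring]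
  generalize 1 ^ 2 * c' + 2 * 1 * -f'' * f'' + (-f'') ^ 2 * 1 = c''
  intro h
  have hdet : det₃ 1 1 c'' 0 0 0 = c'' := by simp [det₃]
  have h3 := h.pos₃
  have h4 := h.uni
  rw [hdet] at h3 h4
  obtain ⟨p, q, hpq, hp⟩ := exists_normalize 1 (Or.inl rfl) h3 (by simpa using h4)
  refine ⟨![1, 0, 0], ![0, 1, 0], ![0, 0, q], ?_, ?_, ?_, ?_, ?_, ?_⟩ <;>
    simp [dotProduct, Fin.sum_univ_three]
  push_cast at hp
  linear_combination (-(q * q)) * hp + c'' * (p * q + 1) * hpq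

/-- A totally positive definite unimodular matrix whose first entry and leading `2 × 2` minor
are equal to `2` represents `1`; otherwise the determinant would be even. -/
lemma UniForm.exists_one (h : UniForm 2 b c d e f) (h2 : 2 * b - d ^ 2 = 2) :
    ∃ k : Zsqrtd 2, b + 2 * k * d + k ^ 2 * 2 = 1 := by
  have hd : Even d.re := by
    have h3 : d ^ 2 = s2 * (s2 * (b - 1)) := by
      rw [← mul_assoc, s2_sq]; linear_combination -h2
    have h4 := (even_re_iff (d ^ 2)).2 ⟨_, h3⟩
    rw [sq, Zsqrtd.re_mul] at h4
    have h5 : Even (d.re * d.re) := by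
      have : Even (2 * d.im * d.im) := by rw [mul_assoc]; exact even_two_mul _
      exact (Int.even_add.1 h4).2 this
    exact (Int.even_mul.1 h5).elim id id
  obtain ⟨d₁, rfl⟩ := (even_re_iff d).1 hd
  have hb : b = 1 + d₁ ^ 2 := by
    apply mul_left_cancel₀ (two_ne_zero (α := Zsqrtd 2))
    linear_combination h2 + d₁ ^ 2 * s2_sq
  by_cases h1 : Even d₁.re
  · obtain ⟨d₂, rfl⟩ := (even_re_iff d₁).1 h1
    refine ⟨-d₂, ?_⟩
    rw [hb]
    linear_combination (-d₂ ^ 2) * s2_sq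
  · exfalso
    have h1' : Even (d₁ - 1).re := by
      rw [Zsqrtd.re_sub, Zsqrtd.re_one, Int.even_sub_one]; exact h1
    obtain ⟨j, hj⟩ := (even_re_iff _).1 h1'
    have hj' : d₁ = 1 + s2 * j := by rw [← hj]; ring
    have hdet : det₃ 2 b c (s2 * d₁) e f =
        2 * (c + s2 * d₁ * e * f - f ^ 2 - (1 + s2 * j + j ^ 2) * e ^ 2) := by
      have hb2 : b = 2 * (1 + s2 * j + j ^ 2) := by
        rw [hb, hj']; linear_combination j ^ 2 * s2_sq
      rw [show det₃ 2 b c (s2 * d₁) e f = c * (2 * b - (s2 * d₁) ^ 2) + 2 * (s2 * d₁) * e * f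
        - 2 * f ^ 2 - b * e ^ 2 by simp only [det₃]; ring, h2, hb2]
      ring
    have := h.uni
    rw [hdet, Zsqrtd.norm_mul, show (2 : Zsqrtd 2).norm = 4 by rfl] at this
    omega

/-- If the first entry and the leading `2 × 2` minor both have norm `4`, the binary form they
belong to represents a unit. -/
lemma UniForm.exists_unit (h : UniForm a b c d e f) (h1 : a.norm = 4)
    (h2 : (a * b - d ^ 2).norm = 4) :
    ∃ u v k : Zsqrtd 2, u * v = 1 ∧ (u ^ 2 * b + 2 * u * k * d + k ^ 2 * a).norm = 1 := by
  obtain ⟨u, u', huu, hu⟩ := exists_normalize 2 (Or.inr rfl) h.pos₁ (by simpa using h1)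
  obtain ⟨w, w', hww, hw⟩ := exists_normalize 2 (Or.inr rfl) h.pos₂ (by simpa using h2)
  push_cast at hu hw
  have hvv : (w * u') * (w' * u) = 1 := by linear_combination hww + w * w' * huu
  set v := w * u' with hv
  have h' := (h.scale huu).op 0 hvv
  have e1 : v ^ 2 * b + 2 * v * 0 * (u * d) + 0 ^ 2 * (u ^ 2 * a) = v ^ 2 * b := by ring
  have e2 : v * (u * d) + 0 * (u ^ 2 * a) = w * d := by
    rw [hv]; linear_combination w * d * huu
  rw [e1, e2, hu] at h'
  obtain ⟨k, hk⟩ := h'.exists_one (by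
    rw [hv]
    linear_combination hw - (w * u') ^ 2 * b * hu + w ^ 2 * a * b * (u * u' + 1) * huu)
  refine ⟨v, w' * u, k * u, hvv, ?_⟩
  have : v ^ 2 * b + 2 * v * (k * u) * d + (k * u) ^ 2 * a = 1 := by
    rw [← hk, hv]
    linear_combination k ^ 2 * hu + 2 * w * k * d * huu
  rw [this]; rfl

/-- A totally positive definite unimodular ternary matrix with diagonal in `ℤ[2√2]` is the Gram
matrix of three vectors in `ℤ[√2]³`. -/
theorem UniForm.isGram (h : UniForm a b c d e f) : IsGram a b c d e f := by
  induction hn : (a.norm * (a * b - d ^ 2).norm).toNat using Nat.strong_induction_on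
    generalizing a b c d e f with
  | _ n ih =>
    have hN1 := h.pos₁.norm_pos
    have hN2 := h.pos₂.norm_pos
    -- exchanging the first two vectors after an elementary operation
    have step₁ : ∀ u v k : Zsqrtd 2, u * v = 1 →
        (u ^ 2 * b + 2 * u * k * d + k ^ 2 * a).norm < a.norm → IsGram a b c d e f := by
      intro u v k huv hlt
      have h' := (h.op k huv).swap₁₂
      apply IsGram.of_op k huv
      apply IsGram.swap₁₂
      have hD : ((u ^ 2 * b + 2 * u * k * d + k ^ 2 * a) * a - (u * d + k * a) ^ 2).norm =
          (a * b - d ^ 2).norm := by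
        rw [show (u ^ 2 * b + 2 * u * k * d + k ^ 2 * a) * a - (u * d + k * a) ^ 2 =
          u ^ 2 * (a * b - d ^ 2) by ring, Zsqrtd.norm_mul, unit_norm_sq huv, one_mul]
      refine ih _ ?_ h' rfl
      have h0 := h'.pos₁.norm_pos
      rw [hD, ← hn]
      have := mul_lt_mul_of_pos_right hlt hN2
      have := mul_pos h0 hN2
      omega
    by_cases c1 : 7 * (a * b - d ^ 2).norm ≤ a.norm ^ 2
    · obtain ⟨u, v, k, huv, hlt⟩ := binary_reduction a d b h.pos₁ h.pos₂ c1
      exact step₁ u v k huv hlt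
    have hid : (a * b - d ^ 2) * (a * c - e ^ 2) - (a * f - d * e) ^ 2 = a * det₃ a b c d e f := by
      simp only [det₃]; ring
    have hidn : (a * det₃ a b c d e f).norm = a.norm := by
      rw [Zsqrtd.norm_mul, h.uni, mul_one]
    by_cases c2 : 7 * a.norm ≤ (a * b - d ^ 2).norm ^ 2
    · obtain ⟨u, v, k, huv, hlt⟩ := binary_reduction (a * b - d ^ 2) (a * f - d * e)
        (a * c - e ^ 2) h.pos₂ (by rw [hid]; exact h.pos₁.mul h.pos₃) (by rwa [hid, hidn])
      have h' := (h.op' k huv).swap₂₃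
      apply IsGram.of_op' k huv
      apply IsGram.swap₂₃
      have hD : a * (u ^ 2 * c + 2 * u * k * f + k ^ 2 * b) - (u * e + k * d) ^ 2 =
        u ^ 2 * (a * c - e ^ 2) + 2 * u * k * (a * f - d * e) + k ^ 2 * (a * b - d ^ 2) := by ring
      refine ih _ ?_ h' rfl
      have h0 := h'.pos₂.norm_pos
      rw [hD] at h0 ⊢
      rw [← hn]
      have := mul_lt_mul_of_pos_left hlt hN1
      have := mul_pos hN1 h0
      omega
    push Not at c1 c2
    have hm1 := h.ha.norm_mod
    have hm2 := ((h.ha.mul h.hb).sub (InR0_sq d)).norm_mod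
    generalize hA : a.norm = A at *
    generalize hB : (a * b - d ^ 2).norm = B at *
    have hA7 : A < 7 := by
      by_contra hcon
      push Not at hcon
      have hB7 : B < 7 ∨ 7 ≤ B := by omega
      rcases le_total A B with hAB | hAB <;> nlinarith
    have hB7 : B < 7 := by
      by_contra hcon
      push Not at hcon
      nlinarith
    have hA' : A = 1 ∨ A = 4 := by omega
    have hB' : B = 1 ∨ B = 4 := by omega
    rcases hA' with rfl | rfl <;> rcases hB' with rfl | rfl
    · exact h.isGram_of_units hA hB
    · norm_num at c2
    · norm_num at c1
    · obtain ⟨u, v, k, huv, hk⟩ := h.exists_unit hA hB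
      exact step₁ u v k huv (by rw [hk]; norm_num)

end

/-! ### Squares modulo rational integers -/

/-- A sum of three squares in `ℤ[√2]`. -/
def Sum3 (t : Zsqrtd 2) : Prop := ∃ x y z : Zsqrtd 2, t = x ^ 2 + y ^ 2 + z ^ 2

/-- `y` is a square modulo the rational integer `n`. -/
def SqMod (n : ℤ) (y : Zsqrtd 2) : Prop := ∃ x : Zsqrtd 2, (n : Zsqrtd 2) ∣ x ^ 2 - y

/-- If `-k t̄` is a square modulo `r = k N(t) - 1`, then `t` is a diagonal entry of a positive
definite unimodular ternary matrix, hence a sum of three squares. -/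
lemma sum3_of_sqMod {t : Zsqrtd 2} (ht : TP t) (h0 : InR0 t) {k r : ℤ} (hk : 0 < k) (hr : 0 < r)
    (hodd : Odd r) (hkr : r = k * t.norm - 1) (h : SqMod r (-(k * star t))) : Sum3 t := by
  obtain ⟨x, q, hq⟩ := h
  have htt : t * star t = ((t.norm : ℤ) : Zsqrtd 2) := (Zsqrtd.norm_eq_mul_conj t).symm
  have hq' : (r : Zsqrtd 2) * q = x ^ 2 + k * star t := by rw [← hq]; ring
  have hkr' : (r : Zsqrtd 2) = k * (t * star t) - 1 := by
    rw [htt, hkr]; push_cast; ring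
  have hdet : det₃ (r : Zsqrtd 2) q t x 0 1 = 1 := by
    simp only [det₃]
    linear_combination t * hq' - hkr'
  have hform : UniForm (r : Zsqrtd 2) q t x 0 1 := by
    refine ⟨InR0_int r, ?_, h0, TP_int hr, ?_, ?_, ?_⟩
    · have h1 : InR0 ((r : Zsqrtd 2) * q) := by
        rw [hq']
        exact (InR0_sq x).add ((InR0_int k).mul (InR0_star h0))
      simp only [InR0, Zsqrtd.im_mul, Zsqrtd.im_intCast, Zsqrtd.re_intCast, zero_mul,
        add_zero] at h1
      exact (Int.even_mul.1 h1).resolve_left (Int.not_even_iff_odd.2 hodd)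
    · rw [hq', show x ^ 2 + k * star t - x ^ 2 = k * star t by ring]
      exact (TP_int hk).mul (TP_star ht)
    · rw [hdet]; exact_mod_cast TP_int one_pos
    · rw [hdet]; rfl
  obtain ⟨-, -, z, -, -, hz, -⟩ := hform.isGram
  refine ⟨z 0, z 1, z 2, ?_⟩
  rw [← hz, dotProduct, Fin.sum_univ_three]; ring

lemma sqMod_of_zmod {p : ℕ} {y : Zsqrtd 2} (c d : ZMod p)
    (h1 : c ^ 2 + 2 * d ^ 2 = (y.re : ZMod p)) (h2 : 2 * c * d = (y.im : ZMod p)) :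
    SqMod p y := by
  obtain ⟨c, rfl⟩ := ZMod.intCast_surjective c
  obtain ⟨d, rfl⟩ := ZMod.intCast_surjective d
  refine ⟨⟨c, d⟩, ?_⟩
  rw [Zsqrtd.intCast_dvd]
  simp only [sq, Zsqrtd.re_sub, Zsqrtd.im_sub, Zsqrtd.re_mul, Zsqrtd.im_mul]
  rw [← ZMod.intCast_zmod_eq_zero_iff_dvd _ p, ← ZMod.intCast_zmod_eq_zero_iff_dvd _ p]
  push_cast
  exact ⟨by linear_combination h1, by linear_combination h2⟩

/-- Modulo a prime that is inert in `ℤ[√2]`, an element whose norm is a square is a square. -/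
lemma sqMod_of_inert {p : ℕ} [Fact p.Prime] (hp : p ≠ 2) (h2 : ¬ IsSquare (2 : ZMod p))
    {y : Zsqrtd 2} (hy : IsSquare ((y.norm : ℤ) : ZMod p)) : SqMod p y := by
  have two_ne : (2 : ZMod p) ≠ 0 := by
    intro h; exact h2 (h ▸ ⟨0, by simp⟩)
  -- the product of two nonsquares is a square
  have hprod : ∀ x z : ZMod p, ¬ IsSquare x → ¬ IsSquare z → IsSquare (x * z) := by
    intro x z hx hz
    have hF : ringChar (ZMod p) ≠ 2 := by rwa [ZMod.ringChar_zmod_n]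
    have hx0 : x ≠ 0 := by rintro rfl; exact hx ⟨0, by simp⟩
    have hz0 : z ≠ 0 := by rintro rfl; exact hz ⟨0, by simp⟩
    rw [← quadraticChar_one_iff_isSquare (mul_ne_zero hx0 hz0), map_mul,
      quadraticChar_neg_one_iff_not_isSquare.2 hx, quadraticChar_neg_one_iff_not_isSquare.2 hz]
    norm_num
  obtain ⟨n, hn⟩ := hy
  rw [norm_eq] at hn
  push_cast at hn
  set a : ZMod p := (y.re : ZMod p) with ha
  set b : ZMod p := (y.im : ZMod p) with hb
  by_cases hb0 : b = 0
  · by_cases hsq : IsSquare a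
    · obtain ⟨c, hc⟩ := hsq
      exact sqMod_of_zmod c 0 (by rw [← ha, hc]; ring) (by rw [← hb, hb0]; ring)
    · obtain ⟨c, hc⟩ := hprod 2 a h2 hsq
      refine sqMod_of_zmod 0 (c / 2) ?_ (by rw [← hb, hb0]; ring)
      rw [← ha]; field_simp; linear_combination -hc
  · have key : ∀ m : ZMod p, a ^ 2 - 2 * b ^ 2 = m * m → IsSquare ((a + m) / 2) → SqMod p y := by
      intro m hm hsq
      obtain ⟨c, hc⟩ := hsq
      have hc0 : c ≠ 0 := by
        rintro rfl
        have h3 : a + m = 0 := by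
          field_simp at hc; linear_combination hc
        have h4 : 2 * (b * b) = 0 := by linear_combination (a - m) * h3 - hm
        simp [two_ne, hb0] at h4
      refine sqMod_of_zmod c (b / (2 * c)) ?_ ?_
      · rw [← ha]
        have hcc : a + m = 2 * (c * c) := by rw [← hc]; field_simp
        field_simp
        apply mul_left_cancel₀ two_ne
        linear_combination -(2 * c ^ 2 - a + m) * hcc - hm
      · rw [← hb]; field_simp
    by_cases hsq : IsSquare ((a + n) / 2)
    · exact key n hn hsq
    by_cases hsq' : IsSquare ((a + -n) / 2)
    · exact key (-n) (by rw [hn]; ring) hsq'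
    exfalso
    obtain ⟨g, hg⟩ := hprod _ _ hsq hsq'
    apply h2
    have hg0 : g ≠ 0 := by
      rintro rfl
      have h4 : 2 * (b * b) = 0 := by
        field_simp at hg
        linear_combination hg - hn
      simp [two_ne, hb0] at h4
    refine ⟨b / g, ?_⟩
    field_simp at hg ⊢
    have h4 : 2 * (2 * g ^ 2 - b ^ 2) = 0 := by linear_combination -hg + hn
    have := (mul_eq_zero.1 h4).resolve_left two_ne
    linear_combination this

/-- An odd number `n ≡ -1` modulo `4N` has Jacobi symbol `(N/n) = 1`. -/
lemma jacobi_eq_one {N n : ℕ} (hN : Odd N) (hn : 4 * N ∣ n + 1) : jacobiSym N n = 1 := by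
  obtain ⟨j, hj⟩ := hn
  have hn4 : n % 4 = 3 := by
    have : n + 1 = 4 * (N * j) := by rw [hj]; ring
    omega
  have hmod : jacobiSym n N = jacobiSym (-1) N := by
    apply jacobiSym.mod_left'
    have : (N : ℤ) ∣ (n : ℤ) - (-1) := ⟨4 * j, by
      have : (n : ℤ) + 1 = 4 * N * j := by exact_mod_cast hj
      linear_combination this⟩
    exact Int.emod_eq_emod_iff_emod_sub_eq_zero.2 (Int.emod_eq_zero_of_dvd this)
  rcases Nat.odd_mod_four_iff.1 (Nat.odd_iff.1 hN) with h | h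
  · rw [jacobiSym.quadratic_reciprocity_one_mod_four h (Nat.odd_iff.2 (by omega)), hmod,
      jacobiSym.at_neg_one hN, ZMod.χ₄_nat_one_mod_four h]
  · rw [jacobiSym.quadratic_reciprocity_three_mod_four h hn4, hmod,
      jacobiSym.at_neg_one hN, ZMod.χ₄_nat_three_mod_four h]
    norm_num

lemma isSquare_of_jacobi {p : ℕ} [Fact p.Prime] {a : ℤ} (h : jacobiSym a p = 1) :
    IsSquare (a : ZMod p) := by
  rw [← jacobiSym.legendreSym.to_jacobiSym] at h
  have h0 : (a : ZMod p) ≠ 0 := by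
    intro h0
    rw [(legendreSym.eq_zero_iff p a).2 h0] at h
    norm_num at h
  exact (legendreSym.eq_one_iff p h0).1 h

/-! ### Sums of three squares in `ℤ[√2]` -/

lemma exists_prime_modEq {m a : ℕ} (hm : 0 < m) (h : a.Coprime m) :
    ∃ p : ℕ, p.Prime ∧ p ≡ a [MOD m] := by
  have : NeZero m := ⟨hm.ne'⟩
  obtain ⟨p, -, hp, hpm⟩ := Nat.forall_exists_prime_gt_and_eq_mod
    ((ZMod.isUnit_iff_coprime a m).2 h) 0
  exact ⟨p, hp, (ZMod.natCast_eq_natCast_iff _ _ _).1 hpm⟩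

lemma exists_prime_odd_mul {m : ℕ} (hm : 0 < m) (h2 : Even m) :
    ∃ p j : ℕ, p.Prime ∧ p + 1 = m * (2 * j + 1) := by
  have hco : (m - 1).Coprime (2 * m) := by
    have h1 : (m - 1).Coprime m := by
      have h3 : (m - 1).Coprime (m - 1 + 1) := by simp
      rwa [Nat.sub_add_cancel hm] at h3
    refine Nat.Coprime.mul_right ?_ h1
    rw [Nat.coprime_two_right, Nat.odd_iff]
    rw [Nat.even_iff] at h2; omega
  obtain ⟨p, hp, hmod⟩ := exists_prime_modEq (by omega) hco
  have h4 : p + 1 ≡ m [MOD (2 * m)] := by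
    have := hmod.add_right 1
    rwa [Nat.sub_add_cancel hm] at this
  have h5 : m ≤ p + 1 := by
    have h6 : (p + 1) % (2 * m) = m := by
      rw [h4, Nat.mod_eq_of_lt (by omega)]
    rw [← h6]; exact Nat.mod_le _ _
  obtain ⟨j, hj⟩ := (Nat.modEq_iff_dvd' h5).1 h4.symm
  exact ⟨p, j, hp, by rw [mul_add, mul_one]; have : m * (2 * j) = 2 * m * j := by ring
                      omega⟩

lemma two_not_isSquare {p : ℕ} [Fact p.Prime] (h : p % 8 = 3 ∨ p % 8 = 5) :
    ¬ IsSquare (2 : ZMod p) := by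
  have h2 : p ≠ 2 := by omega
  rw [ZMod.exists_sq_eq_two_iff h2]
  omega

/-- The case `N(t)` odd or `4` times odd, via a single inert prime. -/
lemma sum3_of_norm {t : Zsqrtd 2} (ht : TP t) (h0 : InR0 t) {N c : ℕ} (hN : Odd N)
    (hc : c = 1 ∨ c = 2) (hnorm : t.norm = c ^ 2 * N) : Sum3 t := by
  have hNpos := hN.pos
  obtain ⟨p, j, hp, hpj⟩ := exists_prime_odd_mul (m := 4 * N) (by omega) ⟨2 * N, by ring⟩
  have : Fact p.Prime := ⟨hp⟩
  have hp8 : p % 8 = 3 := by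
    obtain ⟨i, rfl⟩ := hN
    have : p + 1 = 8 * (i * (2 * j + 1) + j) + 4 := by rw [hpj]; ring
    omega
  have hsq : IsSquare ((N : ℤ) : ZMod p) :=
    isSquare_of_jacobi (jacobi_eq_one hN ⟨_, hpj⟩)
  -- `k` is chosen so that `p = k N(t) - 1`
  obtain ⟨k, hk, hkn⟩ : ∃ k : ℕ, 0 < k ∧ k * c ^ 2 = 4 * (2 * j + 1) := by
    rcases hc with rfl | rfl
    · exact ⟨4 * (2 * j + 1), by omega, by ring⟩
    · exact ⟨2 * j + 1, by omega, by ring⟩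
  refine sum3_of_sqMod ht h0 (k := k) (r := p) (by exact_mod_cast hk) (by exact_mod_cast hp.pos)
    ?_ ?_ (sqMod_of_inert (by omega) (two_not_isSquare (Or.inl hp8)) ?_)
  · rw [Int.odd_iff]; omega
  · rw [hnorm]
    have h1 : ((p : ℤ) + 1) = 4 * N * (2 * j + 1) := by exact_mod_cast hpj
    have h2 : (k : ℤ) * c ^ 2 = 4 * (2 * j + 1) := by exact_mod_cast hkn
    linear_combination h1 - (N : ℤ) * h2
  · rw [Zsqrtd.norm_neg, Zsqrtd.norm_mul, Zsqrtd.norm_intCast, Zsqrtd.norm_conj, hnorm]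
    obtain ⟨g, hg⟩ := hsq
    refine ⟨k * c * g, ?_⟩
    push_cast at hg ⊢
    rw [hg]; ring

lemma SqMod.mul {m n : ℤ} {y : Zsqrtd 2} (h : IsCoprime m n) (hm : SqMod m y) (hn : SqMod n y) :
    SqMod (m * n) y := by
  obtain ⟨x, hx⟩ := hm
  obtain ⟨z, hz⟩ := hn
  have hR : IsCoprime (m : Zsqrtd 2) (n : Zsqrtd 2) := by
    simpa using h.map (Int.castRingHom (Zsqrtd 2))
  obtain ⟨u, v, huv⟩ := hR
  refine ⟨x * (v * n) + z * (u * m), ?_⟩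
  push_cast
  apply IsCoprime.mul_dvd ⟨u, v, huv⟩
  · obtain ⟨q, hq⟩ := hx
    refine ⟨q + u * (z - x) * (2 * x + (z - x) * (u * m)), ?_⟩
    have : v * n = 1 - u * m := by linear_combination huv
    rw [this]; linear_combination hq
  · obtain ⟨q, hq⟩ := hz
    refine ⟨q + v * (x - z) * (2 * z + (x - z) * (v * n)), ?_⟩
    have : u * m = 1 - v * n := by linear_combination huv
    rw [this]; linear_combination hq

lemma jacobi_congr {a b M : ℕ} (h : a ≡ b [MOD M]) : jacobiSym a M = jacobiSym b M := by
  apply jacobiSym.mod_left'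
  exact_mod_cast h

/-- The Jacobi symbol modulo an odd nonsquare takes the value `-1`. -/
lemma exists_jacobi_neg_one {M : ℕ} (hM : Odd M) (hsq : ¬ IsSquare M) :
    ∃ a : ℕ, jacobiSym a M = -1 := by
  obtain ⟨a, b, hab, hsf⟩ := Nat.sq_mul_squarefree M
  have ha1 : a ≠ 1 := by
    rintro rfl
    exact hsq ⟨b, by rw [← hab]; ring⟩
  obtain ⟨q, hq, hqa⟩ := Nat.exists_prime_and_dvd ha1
  have : Fact q.Prime := ⟨hq⟩
  obtain ⟨a', rfl⟩ := hqa
  have hqa' : ¬ q ∣ a' := by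
    intro hd
    have := hsf q (Nat.mul_dvd_mul_left q hd)
    exact hq.one_lt.ne' (by simpa using this)
  have hMpos := hM.pos
  have hb0 : b ≠ 0 := by rintro rfl; simp at hab; omega
  obtain ⟨w, b', hb', rfl⟩ := Nat.exists_eq_pow_mul_and_not_dvd hb0 q hq.ne_one
  set M' := b' ^ 2 * a' with hM'
  have hMM : M = q ^ (2 * w + 1) * M' := by rw [← hab, hM']; ring
  have hqM' : q.Coprime M' := by
    rw [Nat.Prime.coprime_iff_not_dvd hq, hM', hq.dvd_mul]
    rintro (h | h)
    · exact hb' (hq.dvd_of_dvd_pow h)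
    · exact hqa' h
  have hq2 : q ≠ 2 := by
    rintro rfl
    rw [hMM, pow_succ, mul_assoc] at hM
    have := (Nat.odd_mul.1 hM).2
    rw [Nat.odd_mul] at this
    exact absurd this.1 (by decide)
  obtain ⟨g, hg⟩ := FiniteField.exists_nonsquare (F := ZMod q) (by rwa [ZMod.ringChar_zmod_n])
  obtain ⟨x, hx1, hx2⟩ := Nat.chineseRemainder hqM' g.val 1
  refine ⟨x, ?_⟩
  have hM'0 : M' ≠ 0 := by rintro h; rw [h, mul_zero] at hMM; omega
  have : NeZero M' := ⟨hM'0⟩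
  have : NeZero (q ^ (2 * w + 1)) := ⟨pow_ne_zero _ hq.ne_zero⟩
  rw [hMM, jacobiSym.mul_right, jacobiSym.pow_right, jacobi_congr hx2,
    ← jacobiSym.legendreSym.to_jacobiSym]
  have hl : legendreSym q x = -1 := by
    rw [legendreSym.eq_neg_one_iff]
    have : ((x : ℤ) : ZMod q) = g := by
      have := (ZMod.natCast_eq_natCast_iff _ _ _).2 hx1
      rw [Int.cast_natCast, this, ZMod.natCast_zmod_val]
    rwa [this]
  rw [hl]
  simp [jacobiSym.one_left, pow_succ, pow_mul]

/-- The case `N(t) = 8M` with `M` odd and not a square, via a product of two inert primes. -/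
lemma sum3_of_norm_nonsq {t : Zsqrtd 2} (ht : TP t) (h0 : InR0 t) {M : ℕ} (hM : Odd M)
    (hsq : ¬ IsSquare M) (hnorm : t.norm = 8 * M) : Sum3 t := by
  have hMpos := hM.pos
  obtain ⟨x, hx⟩ := exists_jacobi_neg_one hM hsq
  have hco8 : Nat.Coprime 8 M := by
    rw [show 8 = 2 ^ 3 by norm_num]
    exact Nat.Coprime.pow_left 3 (Nat.coprime_two_left.2 hM)
  have hxM : x.Coprime M := by
    have : NeZero M := ⟨hMpos.ne'⟩
    have : jacobiSym x M ≠ 0 := by rw [hx]; norm_num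
    by_contra hcon
    exact this (jacobiSym.eq_zero_iff_not_coprime.2 (by rwa [Int.gcd_natCast_natCast]))
  obtain ⟨z, hz1, hz2⟩ := Nat.chineseRemainder hco8 5 x
  have hz8 : z.Coprime 8 := by
    rw [Nat.Coprime, hz1.gcd_eq]; rfl
  have hzM : z.Coprime M := by
    rw [Nat.Coprime, hz2.gcd_eq]; exact hxM
  obtain ⟨p, hp, hpz⟩ := exists_prime_modEq (m := 8 * M) (by omega) (hz8.mul_right hzM)
  have hp8 : p % 8 = 5 := (hpz.of_mul_right M).trans hz1
  have hpM : p ≡ x [MOD M] := (hpz.of_mul_left 8).trans hz2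
  have hpco : p.Coprime (8 * M) := by
    rw [Nat.Coprime, hpz.gcd_eq]; exact hz8.mul_right hzM
  -- the second prime is `-1/p` modulo `8M`
  have : NeZero (8 * M) := ⟨by omega⟩
  have hunit : IsUnit (-((p : ZMod (8 * M))⁻¹)) := by
    have h1 : (p : ZMod (8 * M)) * (p : ZMod (8 * M))⁻¹ = 1 := ZMod.coe_mul_inv_eq_one p hpco
    exact (IsUnit.of_mul_eq_one_right _ h1).neg
  obtain ⟨q, -, hq, hqz⟩ := Nat.forall_exists_prime_gt_and_eq_mod hunit 0
  have hpq : 8 * M ∣ p * q + 1 := by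
    rw [← ZMod.natCast_eq_zero_iff]
    push_cast
    rw [hqz, mul_neg, ZMod.coe_mul_inv_eq_one p hpco]; ring
  obtain ⟨k, hk⟩ := hpq
  have : Fact p.Prime := ⟨hp⟩
  have : Fact q.Prime := ⟨hq⟩
  have hq8 : q % 8 = 3 := by
    have h1 : (p * q + 1) % 8 = 0 := by rw [hk, mul_assoc]; simp
    have h2 : (p * q) % 8 = 7 := by omega
    rw [Nat.mul_mod, hp8] at h2
    omega
  have hJp : jacobiSym M p = -1 := by
    rw [jacobiSym.quadratic_reciprocity_one_mod_four' hM (by omega), jacobi_congr hpM, hx]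
  have hJq : jacobiSym M q = -1 := by
    have : NeZero p := ⟨hp.ne_zero⟩
    have : NeZero q := ⟨hq.ne_zero⟩
    have h1 : jacobiSym M (p * q) = 1 :=
      jacobi_eq_one hM ⟨2 * k, by rw [hk]; ring⟩
    rw [jacobiSym.mul_right, hJp] at h1
    linarith
  have h2p : jacobiSym 2 p = -1 := by
    rw [jacobiSym.at_two (Nat.odd_iff.2 (by omega)), ZMod.χ₈_nat_eq_if_mod_eight]
    simp [hp8]; omega
  have h2q : jacobiSym 2 q = -1 := by
    rw [jacobiSym.at_two (Nat.odd_iff.2 (by omega)), ZMod.χ₈_nat_eq_if_mod_eight]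
    simp [hq8]; omega
  have key : ∀ r : ℕ, [Fact r.Prime] → (r % 8 = 3 ∨ r % 8 = 5) → jacobiSym M r = -1 →
      jacobiSym 2 r = -1 → SqMod r (-(((k : ℤ) : Zsqrtd 2) * star t)) := by
    intro r _ hr hJ h2
    refine sqMod_of_inert (by omega) (two_not_isSquare hr) ?_
    have hs : IsSquare (((2 * M : ℤ)) : ZMod r) := by
      apply isSquare_of_jacobi
      rw [jacobiSym.mul_left, hJ, h2]; norm_num
    obtain ⟨g, hg⟩ := hs
    rw [Zsqrtd.norm_neg, Zsqrtd.norm_mul, Zsqrtd.norm_intCast, Zsqrtd.norm_conj, hnorm]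
    refine ⟨2 * k * g, ?_⟩
    push_cast at hg ⊢
    linear_combination (4 * (k : ZMod r) ^ 2) * hg
  have hcop : IsCoprime (p : ℤ) (q : ℤ) := by
    rw [Nat.isCoprime_iff_coprime]
    exact (Nat.coprime_primes hp hq).2 (by rintro rfl; omega)
  have hkpos : 0 < k := by
    rcases Nat.eq_zero_or_pos k with h | h
    · rw [h] at hk; omega
    · exact h
  refine sum3_of_sqMod ht h0 (k := k) (r := p * q) (by exact_mod_cast hkpos)
    (by exact_mod_cast Nat.mul_pos hp.pos hq.pos) ?_ ?_
    (SqMod.mul hcop (key p (Or.inr hp8) hJp h2p) (key q (Or.inl hq8) hJq h2q))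
  · rw [Int.odd_mul, Int.odd_iff, Int.odd_iff]; omega
  · rw [hnorm]
    have h1 : ((p : ℤ) * q + 1) = 8 * M * k := by exact_mod_cast hk
    linear_combination h1

/-- The computation behind `two_add_not_isSquare`, in an algebraically closed field. -/
lemma two_add_aux {p : ℕ} [Fact p.Prime] (hp : p % 16 = 7) {K : Type*} [Field K] [IsAlgClosed K]
    [CharP K p] (h2K : (2 : K) ≠ 0) {r u : K} (hr : r ^ 2 = 2) (hu : 2 + r = u * u)
    (hF : u ^ p = u) : u = 0 := by
  obtain ⟨δ, hδ⟩ := IsAlgClosed.exists_pow_nat_eq (u ^ 2 - 4) (n := 2) (by norm_num)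
  obtain ⟨ζ, hζ⟩ : ∃ ζ, ζ = (u + δ) / 2 := ⟨_, rfl⟩
  obtain ⟨ξ, hξ⟩ : ∃ ξ, ξ = (u - δ) / 2 := ⟨_, rfl⟩
  have hmul : ζ * ξ = 1 := by
    rw [hζ, hξ]; field_simp; linear_combination -hδ
  have hadd : ζ + ξ = u := by rw [hζ, hξ]; field_simp; ring
  have h2 : ζ ^ 2 + ξ ^ 2 = r := by
    linear_combination (ζ + ξ + u) * hadd - 2 * hmul - hu
  have h4 : ζ ^ 4 + ξ ^ 4 = 0 := by
    linear_combination (ζ ^ 2 + ξ ^ 2 + r) * h2 - 2 * (ζ * ξ + 1) * hmul + hr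
  have h44 : ζ ^ 4 * ξ ^ 4 = 1 := by rw [← mul_pow, hmul, one_pow]
  have h8 : ζ ^ 8 = -1 := by linear_combination ζ ^ 4 * h4 - h44
  have h8' : ξ ^ 8 = -1 := by linear_combination ξ ^ 4 * h4 - h44
  have hpow : ∀ a b : K, a * b = 1 → a ^ 8 = -1 → a ^ p = -b := by
    intro a b hab ha
    have e1 : a ^ p = a ^ (16 * (p / 16) + 7) := congrArg (a ^ ·) (by omega)
    have e2 : a ^ 16 = 1 := by
      rw [show 16 = 8 * 2 by norm_num, pow_mul, ha]; norm_num
    rw [e1, pow_add, pow_mul, e2, one_pow, one_mul]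
    have : a ^ 7 = a ^ 8 * b := by
      rw [pow_succ a 7, mul_assoc, hab, mul_one]
    rw [this, ha]; ring
  have hFF : ζ ^ p + ξ ^ p = u := by rw [← add_pow_char, hadd, hF]
  rw [hpow ζ ξ hmul h8, hpow ξ ζ (by rw [mul_comm]; exact hmul) h8'] at hFF
  have : 2 * u = 0 := by linear_combination -hFF - hadd
  exact (mul_eq_zero.1 this).resolve_left h2K

/-- For a prime `p ≡ 7` modulo `16`, the element `2 + √2` of `𝔽_p` is not a square: a square root
would be `ζ + ζ⁻¹` for a primitive 16th root of unity `ζ`, and raising to the `p`-th power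
changes its sign. -/
lemma two_add_not_isSquare {p : ℕ} [Fact p.Prime] (hp : p % 16 = 7) {r : ZMod p}
    (hr : r ^ 2 = 2) : ¬ IsSquare (2 + r) := by
  rintro ⟨u, hu⟩
  have two_ne : (2 : ZMod p) ≠ 0 := by
    intro h
    have h' : ((2 : ℕ) : ZMod p) = 0 := by exact_mod_cast h
    rw [ZMod.natCast_eq_zero_iff] at h'
    have := Nat.le_of_dvd (by norm_num) h'
    have := (Fact.out : p.Prime).two_le
    omega
  have : CharP (AlgebraicClosure (ZMod p)) p :=
    charP_of_injective_algebraMap (algebraMap (ZMod p) _).injective p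
  obtain ⟨φ, -⟩ : ∃ φ : ZMod p →+* AlgebraicClosure (ZMod p), φ = algebraMap _ _ := ⟨_, rfl⟩
  have hu0 : u = 0 := by
    refine (map_eq_zero φ).1 (two_add_aux hp (r := φ r) ?_ ?_ ?_ ?_)
    · rw [← map_ofNat φ 2]; exact (map_ne_zero φ).2 two_ne
    · rw [← map_pow, hr, map_ofNat]
    · rw [← map_mul, ← hu, map_add, map_ofNat]
    · rw [← map_pow, ZMod.pow_card]
  have hr2 : r = -2 := by rw [hu0] at hu; linear_combination hu
  rw [hr2] at hr
  exact two_ne (by linear_combination hr)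

/-- For a prime `p ≡ 7` modulo `16`, the element `-(2 - √2)` is a square modulo `p`. -/
lemma sqMod_neg_two_sub {p : ℕ} [Fact p.Prime] (hp : p % 16 = 7) : SqMod p (-(2 - s2)) := by
  have hp2 : p ≠ 2 := by omega
  have hF : ringChar (ZMod p) ≠ 2 := by rwa [ZMod.ringChar_zmod_n]
  obtain ⟨r, hr⟩ := (ZMod.exists_sq_eq_two_iff hp2).2 (Or.inr (by omega))
  have hr' : r ^ 2 = 2 := by rw [hr]; ring
  have hm1 : ¬ IsSquare (-1 : ZMod p) := by
    rw [ZMod.exists_sq_eq_neg_one_iff]; omega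
  have key : ∀ ρ : ZMod p, ρ ^ 2 = 2 → IsSquare (-1 * (2 + ρ)) := by
    intro ρ hρ
    have hx := two_add_not_isSquare hp hρ
    have hx0 : 2 + ρ ≠ 0 := by intro h; exact hx (h ▸ ⟨0, by simp⟩)
    rw [← quadraticChar_one_iff_isSquare (mul_ne_zero (by simp) hx0), map_mul,
      quadraticChar_neg_one_iff_not_isSquare.2 hx, quadraticChar_neg_one_iff_not_isSquare.2 hm1]
    norm_num
  obtain ⟨c₁, h₁⟩ := key (-r) (by rw [neg_sq]; exact hr')
  obtain ⟨c₂, h₂⟩ := key r hr'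
  have hr0 : r ≠ 0 := by
    rintro rfl
    exact two_add_not_isSquare hp hr' ⟨0, by rw [add_zero, ← hr]⟩
  have two_ne : (2 : ZMod p) ≠ 0 := by rw [← hr']; exact pow_ne_zero 2 hr0
  refine sqMod_of_zmod ((c₁ + c₂) / 2) ((c₁ - c₂) / (2 * r)) ?_ ?_
  · have : (-(2 - s2)).re = -2 := by rfl
    rw [this]
    field_simp
    push_cast
    linear_combination (c₁ - c₂) ^ 2 * (-hr') - r ^ 2 * 2 * h₁ - r ^ 2 * 2 * h₂
  · have : (-(2 - s2)).im = 1 := by rfl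
    rw [this]
    field_simp
    push_cast
    linear_combination h₂ - h₁

/-- The case `N(t) = 8m²`, via a single prime `p ≡ 7` modulo `16`, which splits in `ℤ[√2]`. -/
lemma sum3_of_norm_sq {s : Zsqrtd 2} (hs : TP s) {m : ℕ} (hm : Odd m) (hsm : s.norm = m ^ 2) :
    Sum3 (2 * (2 + s2) * s) := by
  have hmpos := hm.pos
  have hre := hs.re_pos
  obtain ⟨T, hT⟩ : ∃ T : ℕ, (T : ℤ) = s.re + m := ⟨(s.re + m).toNat, by omega⟩
  have hT0 : T ≠ 0 := by omega
  obtain ⟨i, T', hT', hTT⟩ := Nat.exists_eq_pow_mul_and_not_dvd hT0 2 (by norm_num)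
  have hT'odd : Odd T' := by
    rw [← Nat.not_even_iff_odd, even_iff_two_dvd]; exact hT'
  have hT'pos := hT'odd.pos
  obtain ⟨p, j, hp, hpj⟩ := exists_prime_odd_mul (m := 8 * (T' * m ^ 2))
    (by positivity) ⟨4 * (T' * m ^ 2), by ring⟩
  have : Fact p.Prime := ⟨hp⟩
  set k := T' * (2 * j + 1) with hk
  have hkodd : Odd k := hT'odd.mul (odd_two_mul_add_one j)
  have hpk : p + 1 = 8 * (k * m ^ 2) := by rw [hpj, hk]; ring
  have hp16 : p % 16 = 7 := by
    obtain ⟨l, hl⟩ := hkodd.mul (hm.pow (n := 2))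
    rw [hl] at hpk; omega
  have hp2 : p ≠ 2 := by omega
  obtain ⟨r, hr⟩ := (ZMod.exists_sq_eq_two_iff hp2).2 (Or.inr (by omega))
  obtain ⟨κ, hκ⟩ : IsSquare ((k : ℤ) : ZMod p) :=
    isSquare_of_jacobi (jacobi_eq_one hkodd ⟨2 * m ^ 2, by rw [hpk]; ring⟩)
  obtain ⟨τ, hτ⟩ : IsSquare ((T' : ℤ) : ZMod p) :=
    isSquare_of_jacobi (jacobi_eq_one hT'odd ⟨2 * m ^ 2 * (2 * j + 1), by rw [hpj]; ring⟩)
  have hr0 : r ≠ 0 := by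
    rintro rfl
    have h' : ((2 : ℕ) : ZMod p) = 0 := by rw [Nat.cast_ofNat, hr, mul_zero]
    rw [ZMod.natCast_eq_zero_iff] at h'
    have := Nat.le_of_dvd (by norm_num) h'
    omega
  have hτ0 : τ ≠ 0 := by
    rintro rfl
    have h' : (T' : ZMod p) = 0 := by rw [mul_zero] at hτ; exact_mod_cast hτ
    rw [ZMod.natCast_eq_zero_iff] at h'
    have h1 : p ∣ 1 := by
      have : p ∣ p + 1 := by rw [hpj]; exact Dvd.dvd.mul_right (h'.mul_right _ |>.mul_left 8) _
      exact (Nat.dvd_add_right (dvd_refl p)).1 this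
    exact hp.one_lt.ne' (Nat.dvd_one.1 h1)
  -- `2T = (r ^ (i + 1) τ)²` modulo `p`; `h` is a lift of the inverse of the root
  obtain ⟨h, hh⟩ := ZMod.intCast_surjective ((r ^ (i + 1) * τ)⁻¹)
  obtain ⟨g, hg⟩ := ZMod.intCast_surjective (r * κ)
  have hH : (p : ℤ) ∣ h ^ 2 * (2 * T) - 1 := by
    rw [← ZMod.intCast_zmod_eq_zero_iff_dvd, hTT]
    push_cast at hτ ⊢
    rw [hh, hτ, hr]
    field_simp
    ring
  have hG : (p : ℤ) ∣ g ^ 2 - 2 * k := by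
    rw [← ZMod.intCast_zmod_eq_zero_iff_dvd]
    push_cast at hκ ⊢
    rw [hg, hκ, hr]; ring
  obtain ⟨q₃, hq₃⟩ := hH
  obtain ⟨q₂, hq₂⟩ := hG
  obtain ⟨w, q₁, hq₁⟩ := sqMod_neg_two_sub hp16
  have hq₃' : (h : Zsqrtd 2) ^ 2 * (2 * (T : ℤ)) - 1 = p * q₃ := by
    have := congrArg (Int.cast : ℤ → Zsqrtd 2) hq₃
    push_cast at this ⊢; exact this
  have hq₂' : (g : Zsqrtd 2) ^ 2 - 2 * (k : ℤ) = p * q₂ := by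
    have := congrArg (Int.cast : ℤ → Zsqrtd 2) hq₂
    push_cast at this ⊢; exact this
  have hST : (star s + m) ^ 2 = star s * (2 * (T : ℤ)) := by
    have h1 : s * star s = ((m : ℤ) : Zsqrtd 2) ^ 2 := by
      rw [← Zsqrtd.norm_eq_mul_conj, hsm]; push_cast; rfl
    have h2 : (2 * (T : ℤ) : Zsqrtd 2) = s + star s + 2 * (m : ℤ) := by
      rw [hT]; ext <;> simp <;> ring
    rw [h2]; push_cast at h1 ⊢
    linear_combination -h1
  have hstar : star (2 * (2 + s2) * s) = 2 * (2 - s2) * star s := by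
    rw [star_mul', star_mul']
    congr 1
  have h22 : TP (2 * (2 + s2)) := TP_iff.2 ⟨by decide, by decide⟩
  refine sum3_of_sqMod (h22.mul hs) (by rw [mul_assoc]; exact InR0_two _) (k := k) (r := p)
    (by exact_mod_cast hkodd.pos) (by exact_mod_cast hp.pos) ?_ ?_
    ⟨w * g * (star s + m) * h, star s * (q₁ * g ^ 2 * (h ^ 2 * (2 * (T : ℤ))) -
      (2 - s2) * (q₂ * (h ^ 2 * (2 * (T : ℤ))) + 2 * (k : ℤ) * q₃)), ?_⟩
  · rw [Int.odd_iff]; omega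
  · rw [Zsqrtd.norm_mul, hsm, show (2 * (2 + s2)).norm = 8 by decide]
    have : ((p : ℤ) + 1) = 8 * (k * m ^ 2) := by exact_mod_cast hpk
    linear_combination this
  · rw [hstar]
    have hq₁' : w ^ 2 + (2 - s2) = p * q₁ := by
      have := hq₁; push_cast at this; linear_combination this
    push_cast at hq₂' hq₃' hST ⊢
    linear_combination w ^ 2 * g ^ 2 * h ^ 2 * hST +
      star s * g ^ 2 * (h ^ 2 * (2 * T)) * hq₁' - star s * (2 - s2) * (h ^ 2 * (2 * T)) * hq₂' -
      star s * (2 - s2) * 2 * k * hq₃'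

/-- Every totally nonnegative element of `ℤ[2√2]` is a sum of three squares in `ℤ[√2]`. -/
theorem sum3_of_TN {t : Zsqrtd 2} (ht : TN t) (h0 : InR0 t) : Sum3 t := by
  induction hn : t.re.toNat using Nat.strong_induction_on generalizing t with
  | _ n ih =>
    by_cases ht0 : t = 0
    · exact ⟨0, 0, 0, by simp [ht0]⟩
    have htp := ht.tp ht0
    have hnp := htp.norm_pos
    have hrep := htp.re_pos
    by_cases hre : Even t.re
    swap
    · refine sum3_of_norm htp h0 (N := t.norm.toNat) (c := 1) ?_ (Or.inl rfl) (by simp; omega)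
      have h1 := sq_odd_mod hre
      rw [Nat.odd_iff]
      rw [norm_eq] at *
      omega
    obtain ⟨x, hx⟩ := hre
    obtain ⟨y, hy⟩ := h0
    set s : Zsqrtd 2 := ⟨x, y⟩ with hs
    have hts : t = 2 * s := by
      rw [two_mul]; ext <;> simp [hs, hx, hy]
    have htwo : TP (2 : Zsqrtd 2) := TP_iff.2 ⟨by decide, by decide⟩
    have hsp : TP s := htwo.of_mul (hts ▸ htp)
    have hsnp := hsp.norm_pos
    have htn : t.norm = 4 * s.norm := by
      rw [hts, Zsqrtd.norm_mul]; rfl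
    have hsn : s.norm = x ^ 2 - 2 * y ^ 2 := norm_eq s
    by_cases hyE : Even y
    · obtain ⟨a, b, c, habc⟩ := ih s.re.toNat (by simp [hs]; omega) hsp.tn hyE rfl
      refine ⟨s2 * a, s2 * b, s2 * c, ?_⟩
      rw [hts, habc]
      linear_combination (-(a ^ 2 + b ^ 2 + c ^ 2)) * s2_sq
    by_cases hxE : Even x
    swap
    · refine sum3_of_norm htp ⟨y, hy⟩ (N := s.norm.toNat) (c := 2) ?_ (Or.inr rfl) ?_
      · have h1 := sq_odd_mod hxE
        rw [Nat.odd_iff]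
        omega
      · rw [htn]; push_cast; omega
    -- `s = √2 (y + (x/2) √2)` has norm `2M` with `M` odd
    obtain ⟨z, rfl⟩ := hxE
    have hy1 := sq_odd_mod hyE
    obtain ⟨M, hM⟩ : ∃ M : ℕ, (M : ℤ) = 2 * z ^ 2 - y ^ 2 :=
      ⟨(2 * z ^ 2 - y ^ 2).toNat, by
        have : s.norm = 2 * (2 * z ^ 2 - y ^ 2) := by rw [hsn]; ring
        omega⟩
    have hsM : s.norm = 2 * M := by rw [hsn, hM]; ring
    have hMo : Odd M := by
      rw [Nat.odd_iff]; omega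
    by_cases hMsq : IsSquare M
    · obtain ⟨m, rfl⟩ := hMsq
      set σ : Zsqrtd 2 := ⟨2 * z - y, y - z⟩ with hσ
      have hsσ : s = (2 + s2) * σ := by
        ext <;> simp [hs, hσ, s2] <;> ring
      have hone : TP (2 + s2) := TP_iff.2 ⟨by decide, by decide⟩
      have hσn : σ.norm = m ^ 2 := by
        have : s.norm = 2 * σ.norm := by rw [hsσ, Zsqrtd.norm_mul]; rfl
        push_cast at hsM
        linarith
      have := sum3_of_norm_sq (hone.of_mul (hsσ ▸ hsp)) (Nat.odd_mul.1 hMo).1 hσn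
      rwa [mul_assoc, ← hsσ, ← hts] at this
    · exact sum3_of_norm_nonsq htp ⟨y, hy⟩ hMo hMsq (by rw [htn, hsM]; ring)

/-! ### Lattice rounding for the quaternion order -/

lemma exists_even_odd_near (p : ℚ) :
    ∃ E O : ℤ, Even E ∧ ¬ Even O ∧ (p - E) ^ 2 + (p - O) ^ 2 ≤ 1 := by
  have h0 : 0 ≤ p - ⌊p⌋ := sub_nonneg.2 (Int.floor_le p)
  have h1 : p - ⌊p⌋ ≤ 1 := by linarith [Int.lt_floor_add_one p]
  have key : (p - ⌊p⌋) ^ 2 + (p - (⌊p⌋ + 1)) ^ 2 ≤ 1 := by nlinarith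
  by_cases h : Even ⌊p⌋
  · exact ⟨⌊p⌋, ⌊p⌋ + 1, h, by rw [Int.even_add_one]; exact not_not.2 h, by push_cast; linarith⟩
  · exact ⟨⌊p⌋ + 1, ⌊p⌋, by rw [Int.even_add_one]; exact h, h, by push_cast; linarith⟩

/-- A rational vector lies at distance at most `√2` from an integral vector whose coordinates
all have the same parity. -/
lemma exists_near_same_parity (p : Fin 4 → ℚ) :
    ∃ U : Fin 4 → ℤ, (∀ i, Even (U i - U 3)) ∧ ∑ i, (p i - U i) ^ 2 ≤ 2 := by
  choose E O hE hO h using exists_even_odd_near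
  have hsum : ∑ i, (p i - E (p i)) ^ 2 + ∑ i, (p i - O (p i)) ^ 2 ≤ 4 := by
    rw [← Finset.sum_add_distrib]
    calc _ ≤ ∑ _i : Fin 4, (1 : ℚ) := Finset.sum_le_sum fun i _ => h (p i)
      _ = 4 := by simp
  by_cases hle : ∑ i, (p i - E (p i)) ^ 2 ≤ 2
  · exact ⟨fun i => E (p i), fun i => (hE _).sub (hE _), hle⟩
  · refine ⟨fun i => O (p i), fun i => ?_, by linarith⟩
    rw [Int.even_sub]
    exact iff_of_false (hO _) (hO _)

/-- Rounding to the even-sum lattice `D₄`, whose covering radius is `1`. At a deep hole there are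
enough nearest lattice vectors to avoid the hyperplane orthogonal to the given `u ≠ 0`. -/
lemma exists_near_even_sum (r u : Fin 4 → ℚ) (hu : u ≠ 0) :
    ∃ V : Fin 4 → ℤ, Even (∑ i, V i) ∧ ∑ i, (r i - V i) ^ 2 ≤ 1 ∧
      (∑ i, (r i - V i) ^ 2 < 1 ∨ ∑ i, u i * (r i - V i) ≠ 0) := by
  suffices h : ∃ V : Fin 4 → ℤ, Even (∑ i, V i) ∧ (∑ i, (r i - V i) ^ 2 < 1 ∨
      (∑ i, (r i - V i) ^ 2 = 1 ∧ ∑ i, u i * (r i - V i) ≠ 0)) by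
    obtain ⟨V, h1, h2 | ⟨h2, h3⟩⟩ := h
    · exact ⟨V, h1, h2.le, Or.inl h2⟩
    · exact ⟨V, h1, h2.le, Or.inr h3⟩
  obtain ⟨δ, hδ⟩ : ∃ δ : Fin 4 → ℚ, ∀ i, δ i = r i - round (r i) := ⟨_, fun i => rfl⟩
  have hδ2 : ∀ i, |δ i| ≤ 1 / 2 := fun i => by rw [hδ]; exact abs_sub_round (r i)
  by_cases hB : ∀ i, |δ i| = 1 / 2
  · obtain ⟨k, hk⟩ : ∃ k : Fin 4 → ℤ, ∀ i, r i = k i + 1 / 2 := by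
      have : ∀ i, ∃ k : ℤ, r i = k + 1 / 2 := by
        intro i
        have h1 := hδ i
        rcases (abs_eq (by norm_num)).1 (hB i) with h | h
        · exact ⟨round (r i), by linarith⟩
        · exact ⟨round (r i) - 1, by push_cast; linarith⟩
      choose k hk using this
      exact ⟨k, hk⟩
    obtain ⟨j, hj⟩ : ∃ j, u j ≠ 0 := Function.ne_iff.1 hu
    -- candidates `k + e` with `e` a `0`-`1` vector of the right parity
    have cand : ∀ e : Fin 4 → ℤ, (∀ i, e i = 0 ∨ e i = 1) → Even (∑ i, k i + ∑ i, e i) →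
        ∑ i, u i * (1 / 2 - e i) ≠ 0 → ∃ V : Fin 4 → ℤ, Even (∑ i, V i) ∧
          (∑ i, (r i - V i) ^ 2 < 1 ∨
            (∑ i, (r i - V i) ^ 2 = 1 ∧ ∑ i, u i * (r i - V i) ≠ 0)) := by
      intro e he hev hne
      refine ⟨fun i => k i + e i, by rw [Finset.sum_add_distrib]; exact hev, Or.inr ⟨?_, ?_⟩⟩
      · have : ∀ i, (r i - ((k i + e i : ℤ) : ℚ)) ^ 2 = 1 / 4 := by
          intro i
          rw [hk]; push_cast
          rcases he i with h | h <;> rw [h] <;> push_cast <;> ring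
        simp only [this]; norm_num
      · convert hne using 3 with i
        rw [hk]; push_cast; ring
    by_contra hcon
    have cand' : ∀ e : Fin 4 → ℤ, (∀ i, e i = 0 ∨ e i = 1) → Even (∑ i, k i + ∑ i, e i) →
        ∑ i, u i * (1 / 2 - (e i : ℚ)) = 0 := fun e he hev => by
      by_contra h; exact hcon (cand e he hev h)
    by_cases hev : Even (∑ i, k i)
    · have e1 := cand' ![0, 0, 0, 0] (by decide) (hev.add (by decide))
      have e2 := cand' ![0, 0, 1, 1] (by decide) (hev.add (by decide))
      have e3 := cand' ![0, 1, 0, 1] (by decide) (hev.add (by decide))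
      have e4 := cand' ![0, 1, 1, 0] (by decide) (hev.add (by decide))
      simp [Fin.sum_univ_four] at e1 e2 e3 e4
      apply hj
      fin_cases j <;> simp <;> linarith
    · rw [Int.not_even_iff_odd] at hev
      have e1 := cand' ![1, 0, 0, 0] (by decide) (hev.add_odd (by decide))
      have e2 := cand' ![0, 1, 0, 0] (by decide) (hev.add_odd (by decide))
      have e3 := cand' ![0, 0, 1, 0] (by decide) (hev.add_odd (by decide))
      have e4 := cand' ![0, 0, 0, 1] (by decide) (hev.add_odd (by decide))
      simp [Fin.sum_univ_four] at e1 e2 e3 e4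
      apply hj
      fin_cases j <;> simp <;> linarith
  have hlt : ∑ i, δ i ^ 2 < 1 := by
    push Not at hB
    obtain ⟨i, hi⟩ := hB
    calc ∑ i, δ i ^ 2 < ∑ _i : Fin 4, (1 / 4 : ℚ) := by
          refine Finset.sum_lt_sum (fun i _ => ?_) ⟨i, Finset.mem_univ _, ?_⟩
          · rw [← sq_abs]; nlinarith [hδ2 i, abs_nonneg (δ i)]
          · rw [← sq_abs]; nlinarith [lt_of_le_of_ne (hδ2 i) hi, abs_nonneg (δ i)]
      _ = 1 := by norm_num
  by_cases hev : Even (∑ i, round (r i))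
  · exact ⟨fun i => round (r i), hev, Or.inl (by simpa only [hδ] using hlt)⟩
  rw [Int.not_even_iff_odd] at hev
  have upd : ∀ (i : Fin 4) (σ : ℤ), Odd σ →
      Even (∑ k, (round (r k) + if k = i then σ else 0)) := by
    intro i σ hσ
    rw [Finset.sum_add_distrib]
    simpa using hev.add_odd hσ
  have updsq : ∀ (i : Fin 4) (σ : ℤ),
      ∑ k, (r k - ((round (r k) + if k = i then σ else 0 : ℤ) : ℚ)) ^ 2 =
        ∑ k, δ k ^ 2 + (σ ^ 2 - 2 * σ * δ i) := by
    intro i σ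
    have : ∀ k, (r k - ((round (r k) + if k = i then σ else 0 : ℤ) : ℚ)) ^ 2 =
        δ k ^ 2 + if k = i then σ ^ 2 - 2 * σ * δ i else 0 := by
      intro k
      rw [hδ]
      split_ifs with h
      · subst h; rw [hδ]; push_cast; ring
      · push_cast; ring
    simp only [this, Finset.sum_add_distrib]
    simp
  by_cases hA : ∀ i, δ i = 0
  · obtain ⟨j, hj⟩ : ∃ j, u j ≠ 0 := Function.ne_iff.1 hu
    refine ⟨_, upd j 1 odd_one, Or.inr ⟨?_, ?_⟩⟩
    · rw [updsq]; simp [hA]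
    · have : ∀ k, u k * (r k - ((round (r k) + if k = j then 1 else 0 : ℤ) : ℚ)) =
          if k = j then - u j else 0 := by
        intro k
        have h1 := hδ k
        rw [hA] at h1
        split_ifs with h
        · subst h; push_cast; linear_combination - u k * h1
        · push_cast; linear_combination - u k * h1
      simp only [this]
      simpa using hj
  push Not at hA
  obtain ⟨i₀, hi₀⟩ := hA
  obtain ⟨i, -, hi⟩ := Finset.exists_max_image Finset.univ (fun i => |δ i|) ⟨i₀, Finset.mem_univ _⟩
  have hpos : 0 < |δ i| := lt_of_lt_of_le (abs_pos.2 hi₀) (hi i₀ (Finset.mem_univ _))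
  have hsum4 : ∑ k, δ k ^ 2 ≤ 4 * |δ i| ^ 2 := by
    calc ∑ k, δ k ^ 2 ≤ ∑ _k : Fin 4, |δ i| ^ 2 := Finset.sum_le_sum fun k _ => by
          rw [← sq_abs (δ k)]; exact pow_le_pow_left₀ (abs_nonneg _) (hi k (Finset.mem_univ _)) 2
      _ = _ := by simp
  have hfin : ∑ k, δ k ^ 2 + (1 - 2 * |δ i|) < 1 := by
    rcases (hδ2 i).lt_or_eq with h | h
    · nlinarith
    · rw [h]; linarith
  rcases abs_choice (δ i) with h | h
  · refine ⟨_, upd i 1 odd_one, Or.inl ?_⟩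
    rw [updsq]; rw [h] at hfin; push_cast; linarith
  · refine ⟨_, upd i (-1) (by decide), Or.inl ?_⟩
    rw [updsq]; rw [h] at hfin; push_cast; linarith

/-- The final estimate for the norm of the remainder. -/
lemma norm_lt_sixteen (u v : Fin 4 → ℚ) (hu : ∑ i, u i ^ 2 ≤ 2) (hv : ∑ i, v i ^ 2 ≤ 1)
    (h : u = 0 ∨ ∑ i, v i ^ 2 < 1 ∨ ∑ i, u i * v i ≠ 0) :
    (∑ i, u i ^ 2 + 2 * ∑ i, v i ^ 2) ^ 2 - 8 * (∑ i, u i * v i) ^ 2 < 16 := by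
  have h1 : 0 ≤ ∑ i, u i ^ 2 := Finset.sum_nonneg fun i _ => sq_nonneg _
  have h2 : 0 ≤ ∑ i, v i ^ 2 := Finset.sum_nonneg fun i _ => sq_nonneg _
  rcases h with h | h | h
  · subst h
    simp only [Pi.zero_apply, zero_mul, Finset.sum_const_zero]
    norm_num
    nlinarith
  · have := sq_nonneg (∑ i, u i * v i)
    nlinarith
  · have : 0 < (∑ i, u i * v i) ^ 2 := by positivity
    nlinarith

/-! ### A maximal quaternion order -/

section

open Quaternion

/-- The quaternion `2a + √2 b (1 + i) + √2 c (1 + j) + d (1 + i + j + k)`, that is, twice the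
element with coordinates `a, b, c, d` of a maximal order of the Hamilton quaternions
over `ℚ(√2)`. -/
def mk4 (a b c d : Zsqrtd 2) : ℍ[Zsqrtd 2] :=
  ⟨2 * a + s2 * b + s2 * c + d, s2 * b + d, s2 * c + d, d⟩

/-- `X` is twice an element of the maximal order. Doubling keeps the coordinates in `ℤ[√2]`. -/
def IsM (X : ℍ[Zsqrtd 2]) : Prop := ∃ a b c d, X = mk4 a b c d

lemma re_mk4 (a b c d : Zsqrtd 2) : (mk4 a b c d).re = 2 * a + s2 * b + s2 * c + d := rfl
lemma imI_mk4 (a b c d : Zsqrtd 2) : (mk4 a b c d).imI = s2 * b + d := rfl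
lemma imJ_mk4 (a b c d : Zsqrtd 2) : (mk4 a b c d).imJ = s2 * c + d := rfl
lemma imK_mk4 (a b c d : Zsqrtd 2) : (mk4 a b c d).imK = d := rfl

lemma mk4_mul (a b c d x y z w : Zsqrtd 2) : mk4 a b c d * mk4 x y z w = (2 : Zsqrtd 2) •
    mk4 (a * x - b * y - c * y - c * z - s2 * c * w - s2 * d * y - d * w)
      (a * y + b * x + s2 * b * y + s2 * c * y + c * w + d * y - d * z)
      (a * z - b * w + c * x + s2 * c * y + s2 * c * z + c * w + d * y)
      (a * w + b * z + s2 * b * w - c * y + d * x + s2 * d * z + d * w) := by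
  have h := s2_sq
  apply Quaternion.ext <;>
    simp only [re_mk4, imI_mk4, imJ_mk4, imK_mk4, Quaternion.re_mul, Quaternion.imI_mul, Quaternion.imJ_mul,
      Quaternion.imK_mul, Quaternion.re_smul, Quaternion.imI_smul, Quaternion.imJ_smul,
      Quaternion.imK_smul, smul_eq_mul] <;> grind

lemma normSq_mk4 (a b c d : Zsqrtd 2) : normSq (mk4 a b c d) =
    4 * (a ^ 2 + b ^ 2 + c ^ 2 + d ^ 2 + s2 * a * b + s2 * a * c + a * d + b * c +
      s2 * b * d + s2 * c * d) := by
  have h := s2_sq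
  rw [normSq_def']
  simp only [re_mk4, imI_mk4, imJ_mk4, imK_mk4]
  grind

lemma two_smul_cancel {X Y : ℍ[Zsqrtd 2]} (h : (2 : Zsqrtd 2) • X = (2 : Zsqrtd 2) • Y) :
    X = Y := by
  have h2 : (2 : Zsqrtd 2) ≠ 0 := by decide
  have h0 := congrArg QuaternionAlgebra.re h
  have h1 := congrArg QuaternionAlgebra.imI h
  have h3 := congrArg QuaternionAlgebra.imJ h
  have h4 := congrArg QuaternionAlgebra.imK h
  simp only [Quaternion.re_smul, Quaternion.imI_smul, Quaternion.imJ_smul,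
    Quaternion.imK_smul, smul_eq_mul] at h0 h1 h3 h4
  apply Quaternion.ext
  exacts [mul_left_cancel₀ h2 h0, mul_left_cancel₀ h2 h1, mul_left_cancel₀ h2 h3,
    mul_left_cancel₀ h2 h4]

lemma IsM.mul {X Y : ℍ[Zsqrtd 2]} (hX : IsM X) (hY : IsM Y) :
    ∃ Z, IsM Z ∧ X * Y = (2 : Zsqrtd 2) • Z := by
  obtain ⟨a, b, c, d, rfl⟩ := hX
  obtain ⟨x, y, z, w, rfl⟩ := hY
  exact ⟨_, ⟨_, _, _, _, rfl⟩, mk4_mul ..⟩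

lemma IsM.add {X Y : ℍ[Zsqrtd 2]} (hX : IsM X) (hY : IsM Y) : IsM (X + Y) := by
  obtain ⟨a, b, c, d, rfl⟩ := hX
  obtain ⟨x, y, z, w, rfl⟩ := hY
  refine ⟨a + x, b + y, c + z, d + w, ?_⟩
  apply Quaternion.ext <;> simp [re_mk4, imI_mk4, imJ_mk4, imK_mk4] <;> ring

lemma IsM.smul {X : ℍ[Zsqrtd 2]} (hX : IsM X) (r : Zsqrtd 2) : IsM (r • X) := by
  obtain ⟨a, b, c, d, rfl⟩ := hX
  refine ⟨r * a, r * b, r * c, r * d, ?_⟩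
  apply Quaternion.ext <;> simp [re_mk4, imI_mk4, imJ_mk4, imK_mk4] <;> ring

lemma IsM.star {X : ℍ[Zsqrtd 2]} (hX : IsM X) : IsM (star X) := by
  obtain ⟨a, b, c, d, rfl⟩ := hX
  refine ⟨a + s2 * b + s2 * c + d, -b, -c, -d, ?_⟩
  apply Quaternion.ext <;> simp [re_mk4, imI_mk4, imJ_mk4, imK_mk4] <;> ring

lemma IsM.sub {X Y : ℍ[Zsqrtd 2]} (hX : IsM X) (hY : IsM Y) : IsM (X - Y) := by
  obtain ⟨a, b, c, d, rfl⟩ := hX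
  obtain ⟨x, y, z, w, rfl⟩ := hY
  refine ⟨a - x, b - y, c - z, d - w, ?_⟩
  apply Quaternion.ext <;> simp [re_mk4, imI_mk4, imJ_mk4, imK_mk4] <;> ring

lemma IsM.normSq {X : ℍ[Zsqrtd 2]} (hX : IsM X) : ∃ n, normSq X = 4 * n := by
  obtain ⟨a, b, c, d, rfl⟩ := hX
  exact ⟨_, normSq_mk4 ..⟩

/-- Membership in the order in terms of the parities of the rational and `√2` parts of
the coordinates. -/
lemma isM_of_parity {X : ℍ[Zsqrtd 2]} {x y z w : Zsqrtd 2} (hx : X.re = x) (hy : X.imI = y)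
    (hz : X.imJ = z) (hw : X.imK = w) (h1 : Even (x.re - w.re)) (h2 : Even (y.re - w.re))
    (h3 : Even (z.re - w.re)) (h4 : Even (x.im + y.im + z.im + w.im)) :
    IsM X := by
  obtain ⟨b, hb⟩ := (even_re_iff (y - w)).1 (by simpa using h2)
  obtain ⟨c, hc⟩ := (even_re_iff (z - w)).1 (by simpa using h3)
  have h5 : Even (x - y - z + w).re := by
    simp only [Zsqrtd.re_add, Zsqrtd.re_sub]
    rw [Int.even_iff] at *; omega
  have h6 : Even (x - y - z + w).im := by
    simp only [Zsqrtd.im_add, Zsqrtd.im_sub]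
    rw [Int.even_iff] at *; omega
  obtain ⟨a₁, ha₁⟩ := h5
  obtain ⟨a₂, ha₂⟩ := h6
  have ha : x - y - z + w = 2 * ⟨a₁, a₂⟩ := by
    rw [two_mul]; ext
    · rw [ha₁]; rfl
    · rw [ha₂]; rfl
  refine ⟨⟨a₁, a₂⟩, b, c, w, ?_⟩
  apply Quaternion.ext <;> simp only [re_mk4, imI_mk4, imJ_mk4, imK_mk4]
  · linear_combination hx + ha + hb + hc
  · linear_combination hy + hb
  · linear_combination hz + hc
  · exact hw

lemma norm_sum_sq (κ : Zsqrtd 2) (e : Fin 4 → Zsqrtd 2) :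
    κ.norm ^ 2 * (∑ i, e i ^ 2).norm =
      (∑ i, (κ * e i).re ^ 2 + 2 * ∑ i, (κ * e i).im ^ 2) ^ 2 -
        8 * (∑ i, (κ * e i).re * (κ * e i).im) ^ 2 := by
  have h : (κ ^ 2 * ∑ i, e i ^ 2) = (⟨∑ i, (κ * e i).re ^ 2 + 2 * ∑ i, (κ * e i).im ^ 2,
      2 * ∑ i, (κ * e i).re * (κ * e i).im⟩ : Zsqrtd 2) := by
    rw [Finset.mul_sum]
    simp only [← mul_pow]
    ext <;> simp only [Fin.sum_univ_four, pow_two, Zsqrtd.re_add, Zsqrtd.im_add,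
      Zsqrtd.re_mul (κ * _) (κ * _), Zsqrtd.im_mul (κ * _) (κ * _)] <;> ring
  rw [pow_two, ← Zsqrtd.norm_mul, ← Zsqrtd.norm_mul, ← pow_two, h, norm_eq]
  ring

/-- Division with remainder by a totally positive `α` in the maximal order. The factor `16` is the
norm of `4`, as reduced norms are multiplied by `4` under the doubling in `IsM`. -/
lemma exists_near {α : Zsqrtd 2} (hα : TP α) (Z : ℍ[Zsqrtd 2]) :
    ∃ M, IsM M ∧ (normSq (Z - α • M)).norm < 16 * α.norm ^ 2 := by
  have hN := hα.norm_pos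
  obtain ⟨N, hNdef⟩ : ∃ N : ℤ, N = α.norm := ⟨_, rfl⟩
  rw [← hNdef] at hN ⊢
  have hNQ : (0 : ℚ) < N := by exact_mod_cast hN
  obtain ⟨z, hz⟩ : ∃ z : Fin 4 → Zsqrtd 2, z = ![Z.re, Z.imI, Z.imJ, Z.imK] := ⟨_, rfl⟩
  obtain ⟨U, hU, hU2⟩ := exists_near_same_parity (fun i => ((star α * z i).re : ℚ) / N)
  obtain ⟨u, hu⟩ : ∃ u : Fin 4 → ℚ, u = fun i => ((star α * z i).re : ℚ) / N - U i := ⟨_, rfl⟩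
  obtain ⟨V, hV, hV2, hV3⟩ : ∃ V : Fin 4 → ℤ, Even (∑ i, V i) ∧
      ∑ i, (((star α * z i).im : ℚ) / N - V i) ^ 2 ≤ 1 ∧
      (u = 0 ∨ ∑ i, (((star α * z i).im : ℚ) / N - V i) ^ 2 < 1 ∨
        ∑ i, u i * (((star α * z i).im : ℚ) / N - V i) ≠ 0) := by
    by_cases hu0 : u = 0
    · obtain ⟨V, h1, h2, -⟩ := exists_near_even_sum
        (fun i => ((star α * z i).im : ℚ) / N) (fun _ => 1) (by
          intro h; simpa using congrFun h 0)
      exact ⟨V, h1, h2, Or.inl hu0⟩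
    · obtain ⟨V, h1, h2, h3⟩ := exists_near_even_sum
        (fun i => ((star α * z i).im : ℚ) / N) u hu0
      exact ⟨V, h1, h2, Or.inr h3⟩
  obtain ⟨v, hv⟩ : ∃ v : Fin 4 → ℚ, v = fun i => ((star α * z i).im : ℚ) / N - V i := ⟨_, rfl⟩
  have key := norm_lt_sixteen u v (by simpa only [hu] using hU2) (by simpa only [hv] using hV2)
    (by simpa only [hv] using hV3)
  obtain ⟨M, hM0, hM1, hM2, hM3⟩ : ∃ M : ℍ[Zsqrtd 2], M.re = ⟨U 0, V 0⟩ ∧ M.imI = ⟨U 1, V 1⟩ ∧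
      M.imJ = ⟨U 2, V 2⟩ ∧ M.imK = ⟨U 3, V 3⟩ :=
    ⟨⟨⟨U 0, V 0⟩, ⟨U 1, V 1⟩, ⟨U 2, V 2⟩, ⟨U 3, V 3⟩⟩, rfl, rfl, rfl, rfl⟩
  refine ⟨M, isM_of_parity hM0 hM1 hM2 hM3 (hU 0) (hU 1) (hU 2) (by simpa [Fin.sum_univ_four] using hV), ?_⟩
  obtain ⟨e, he⟩ : ∃ e : Fin 4 → Zsqrtd 2, e = fun i => z i - α * ⟨U i, V i⟩ := ⟨_, rfl⟩
  have hns : normSq (Z - α • M) = ∑ i, e i ^ 2 := by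
    rw [normSq_def', Fin.sum_univ_four, he, hz]
    simp [hM0, hM1, hM2, hM3]
  have hαα : star α * α = N := by
    rw [mul_comm, ← Zsqrtd.norm_eq_mul_conj, hNdef]
  have hse : ∀ i, star α * e i = star α * z i - N * ⟨U i, V i⟩ := by
    intro i; rw [he]; simp only; rw [mul_sub, ← mul_assoc, hαα]
  have hre : ∀ i, ((star α * e i).re : ℚ) = N * u i := by
    intro i; rw [hse, hu]; simp only [Zsqrtd.re_sub, Zsqrtd.re_smul]
    push_cast; field_simp
  have him : ∀ i, ((star α * e i).im : ℚ) = N * v i := by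
    intro i; rw [hse, hv]; simp only [Zsqrtd.im_sub, Zsqrtd.im_smul]
    push_cast; field_simp
  have hnn := norm_sum_sq (star α) e
  rw [Zsqrtd.norm_conj, ← hNdef, ← hns] at hnn
  have hnnQ := congrArg (Int.cast : ℤ → ℚ) hnn
  push_cast at hnnQ
  simp only [hre, him, mul_pow] at hnnQ
  have e3 : ∑ i, (N : ℚ) * u i * (N * v i) = N ^ 2 * ∑ i, u i * v i := by
    rw [Finset.mul_sum]; exact Finset.sum_congr rfl fun i _ => by ring
  rw [e3, ← Finset.mul_sum, ← Finset.mul_sum] at hnnQ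
  have hN2 : (0 : ℚ) < N ^ 2 := by positivity
  have hfin : (N : ℚ) ^ 2 * ((normSq (Z - α • M)).norm : ℚ) < N ^ 2 * (16 * N ^ 2) := by
    rw [hnnQ]
    have := mul_lt_mul_of_pos_left key (by positivity : (0 : ℚ) < N ^ 2 * N ^ 2)
    linarith
  have := lt_of_mul_lt_mul_left hfin hN2.le
  exact_mod_cast this

/-! ### Factorisation in the order, and forms with an odd leading coefficient -/

lemma q_smul_mul (r : Zsqrtd 2) (X Y : ℍ[Zsqrtd 2]) : (r • X) * Y = r • (X * Y) := by
  apply Quaternion.ext <;> simp <;> ring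

lemma q_mul_smul (r : Zsqrtd 2) (X Y : ℍ[Zsqrtd 2]) : X * (r • Y) = r • (X * Y) := by
  apply Quaternion.ext <;> simp <;> ring

lemma q_smul_smul (r s : Zsqrtd 2) (X : ℍ[Zsqrtd 2]) : r • (s • X) = (r * s) • X := by
  apply Quaternion.ext <;> simp [mul_assoc]

lemma q_smul_add (r : Zsqrtd 2) (X Y : ℍ[Zsqrtd 2]) : r • (X + Y) = r • X + r • Y := by
  apply Quaternion.ext <;> simp

lemma q_star_mul (X Y : ℍ[Zsqrtd 2]) : star (X * Y) = star Y * star X := by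
  apply Quaternion.ext <;> simp

lemma q_star_star (X : ℍ[Zsqrtd 2]) : star (star X) = X := by
  apply Quaternion.ext <;> simp

lemma normSq_TN (X : ℍ[Zsqrtd 2]) : TN (normSq X) := by
  rw [normSq_def']
  exact (((TN_sq _).add (TN_sq _)).add (TN_sq _)).add (TN_sq _)

lemma normSq_TP {X : ℍ[Zsqrtd 2]} (h : X ≠ 0) : TP (normSq X) := by
  refine (normSq_TN X).tp fun h0 => h ?_
  have h1 := congrArg emb₁ h0
  rw [normSq_def', map_zero] at h1
  simp only [map_add, map_pow] at h1
  have e : ∀ t, emb₁ t ^ 2 ≤ 0 → t = 0 := fun t ht =>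
    emb₁_inj (pow_eq_zero_iff (n := 2) (by norm_num) |>.1 (le_antisymm ht (sq_nonneg _)))
  have n1 := sq_nonneg (emb₁ X.re)
  have n2 := sq_nonneg (emb₁ X.imI)
  have n3 := sq_nonneg (emb₁ X.imJ)
  have n4 := sq_nonneg (emb₁ X.imK)
  apply Quaternion.ext
  · rw [Quaternion.re_zero]; exact e _ (by linarith)
  · rw [Quaternion.imI_zero]; exact e _ (by linarith)
  · rw [Quaternion.imJ_zero]; exact e _ (by linarith)
  · rw [Quaternion.imK_zero]; exact e _ (by linarith)

lemma mul_of_star_mul {A W M : ℍ[Zsqrtd 2]} {α : Zsqrtd 2} (hA : normSq A = 4 * α)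
    (h : star A * M = (2 : Zsqrtd 2) • W) : A * W = (2 : Zsqrtd 2) • (α • M) := by
  apply two_smul_cancel
  rw [← q_mul_smul, ← h, ← mul_assoc, self_mul_star, hA, coe_mul_eq_smul, q_smul_smul, q_smul_smul,
    show 4 * α = 2 * 2 * α by ring]

/-- Every totally positive element is the reduced norm of an element of the maximal order. -/
lemma exists_normSq {α : Zsqrtd 2} (hα : TP α) : ∃ A, IsM A ∧ normSq A = 4 * α := by
  have htwo : TP (2 : Zsqrtd 2) := TP_iff.2 ⟨by decide, by decide⟩
  obtain ⟨x, y, w, h⟩ := sum3_of_TN (htwo.mul hα).tn (InR0_two α)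
  obtain ⟨A, h0, h1, h2, h3⟩ : ∃ A : ℍ[Zsqrtd 2], A.re = 0 ∧ A.imI = s2 * x ∧ A.imJ = s2 * y ∧
    A.imK = s2 * w := ⟨⟨0, s2 * x, s2 * y, s2 * w⟩, rfl, rfl, rfl, rfl⟩
  refine ⟨A, isM_of_parity h0 h1 h2 h3 ?_ ?_ ?_ ?_, ?_⟩
  · exact ⟨-w.im, by simp [s2]; ring⟩
  · exact ⟨x.im - w.im, by simp [s2]; ring⟩
  · exact ⟨y.im - w.im, by simp [s2]; ring⟩
  · have hre := congrArg Zsqrtd.re h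
    simp [pow_two, s2] at hre ⊢
    have e1 : Even (x.re * x.re + y.re * y.re + w.re * w.re) :=
      ⟨α.re - x.im * x.im - y.im * y.im - w.im * w.im, by linarith⟩
    simp only [Int.even_add, Int.even_mul, or_self] at e1 ⊢
    exact e1
  · rw [normSq_def', h0, h1, h2, h3]
    linear_combination (x ^ 2 + y ^ 2 + w ^ 2) * s2_sq - 2 * h

/-- An element of the order whose reduced norm is divisible by a totally positive `α` has a left
divisor of reduced norm `α`. -/
theorem exists_left_factor {α : Zsqrtd 2} (hα : TP α) {Z : ℍ[Zsqrtd 2]} (hZ : IsM Z)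
    {n : Zsqrtd 2} (hn : normSq Z = 4 * α * n) :
    ∃ A C, IsM A ∧ IsM C ∧ normSq A = 4 * α ∧ A * C = (2 : Zsqrtd 2) • Z := by
  induction hk : α.norm.toNat using Nat.strong_induction_on generalizing α Z n with
  | _ k ih =>
  obtain ⟨M, hM, hlt⟩ := exists_near hα Z
  obtain ⟨Z', hZ'⟩ : ∃ Z', Z' = Z - α • M := ⟨_, rfl⟩
  rw [← hZ'] at hlt
  have hZZ : Z = Z' + α • M := by rw [hZ']; abel
  by_cases h0 : Z' = 0
  · obtain ⟨A, hA, hAn⟩ := exists_normSq hα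
    obtain ⟨C, hC, hAC⟩ := hA.star.mul hM
    exact ⟨A, C, hA, hC, hAn, by rw [mul_of_star_mul hAn hAC, hZZ, h0, zero_add]⟩
  obtain ⟨m, hm⟩ := hM.normSq
  obtain ⟨W, hW, hZW⟩ := hZ.mul hM.star
  have hN : normSq Z' = 4 * (α * (n + α * m - W.re)) := by
    have hre := congrArg QuaternionAlgebra.re hZW
    rw [Quaternion.re_smul, smul_eq_mul] at hre
    have : (Z * star (-(α • M))).re = -(α * (Z * star M).re) := by
      simp
      ring
    rw [hZ', sub_eq_add_neg, normSq_add, normSq_neg, normSq_smul, this, hn, hm, hre]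
    ring
  obtain ⟨α', hα'⟩ : ∃ α', α' = n + α * m - W.re := ⟨_, rfl⟩
  rw [← hα'] at hN
  have hTP : TP α' := by
    have h4 : TP (4 : Zsqrtd 2) := TP_iff.2 ⟨by decide, by decide⟩
    have := normSq_TP h0
    rw [hN] at this
    exact hα.of_mul (h4.of_mul this)
  have hαn := hα.norm_pos
  have hα'n := hTP.norm_pos
  have hlt' : α'.norm < α.norm := by
    rw [hN, Zsqrtd.norm_mul, Zsqrtd.norm_mul, show (4 : Zsqrtd 2).norm = 16 by decide] at hlt
    nlinarith
  obtain ⟨A', C', hA', hC', hnA', hAC'⟩ := ih α'.norm.toNat (by omega) hTP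
    (Z := star Z') (n := α) (by rw [hZ']; exact (hZ.sub (hM.smul α)).star)
    (by rw [normSq_star, hN]; ring) rfl
  have hnC' : normSq C' = 4 * α := by
    have := congrArg normSq hAC'
    rw [map_mul, normSq_smul, normSq_star, hN, hnA'] at this
    have h4 : (4 * α' : Zsqrtd 2) ≠ 0 := mul_ne_zero (by decide) hTP.ne_zero
    apply mul_left_cancel₀ h4
    rw [this]; ring
  have hnA : normSq (star C') = 4 * α := by rw [normSq_star, hnC']
  obtain ⟨V, hV, hAV⟩ := hC'.star.star.mul hM
  refine ⟨star C', star A' + V, hC'.star, hA'.star.add hV, hnA, ?_⟩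
  rw [mul_add, mul_of_star_mul hnA hAV, ← q_star_mul, hAC', Quaternion.star_smul, q_star_star,
    ← q_smul_add, ← hZZ]

/-- Reduction of `ℤ[√2]` modulo the prime `√2`. -/
def parity : Zsqrtd 2 →+* ZMod 2 := Zsqrtd.lift ⟨0, by decide⟩

lemma parity_apply (t : Zsqrtd 2) : parity t = (t.re : ZMod 2) := by
  simp [parity]

lemma parity_eq_zero {t : Zsqrtd 2} : parity t = 0 ↔ Even t.re := by
  rw [parity_apply, ZMod.intCast_zmod_eq_zero_iff_dvd, even_iff_two_dvd]; rfl

lemma parity_s2 : parity s2 = 0 := by rw [parity_apply]; rfl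

/-- An element of odd reduced norm is congruent modulo `√2` to a unit of the order. -/
lemma exists_unit {a b c d α : Zsqrtd 2} (h : normSq (mk4 a b c d) = 4 * α)
    (hα : ¬ Even α.re) : ∃ ε, IsM ε ∧ normSq ε = 4 ∧ ∃ M, IsM M ∧ mk4 a b c d = ε + s2 • M := by
  rw [normSq_mk4] at h
  have h1 := congrArg parity (mul_left_cancel₀ (by decide) h)
  have hα1 : parity α = 1 := by
    have : ∀ x : ZMod 2, x ≠ 0 → x = 1 := by decide
    exact this _ fun h => hα (parity_eq_zero.1 h)
  rw [hα1] at h1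
  simp only [map_add, map_mul, map_pow, parity_s2, zero_mul, add_zero] at h1
  have key : ∀ p q r t : ZMod 2, p ^ 2 + q ^ 2 + r ^ 2 + t ^ 2 + p * t + q * r = 1 →
      (p = 1 ∧ q = 0 ∧ r = 0 ∧ t = 0) ∨ (p = 0 ∧ q = 0 ∧ r = 0 ∧ t = 1) ∨
      (p = -1 ∧ q = 0 ∧ r = 0 ∧ t = 1) ∨ (p = 0 ∧ q = 1 ∧ r = 0 ∧ t = 0) ∨
      (p = 0 ∧ q = 0 ∧ r = 1 ∧ t = 0) ∨ (p = 0 ∧ q = 1 ∧ r = -1 ∧ t = 0) := by decide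
  have fin : ∀ e₀ e₁ e₂ e₃ : Zsqrtd 2, parity a = parity e₀ → parity b = parity e₁ →
      parity c = parity e₂ → parity d = parity e₃ → normSq (mk4 e₀ e₁ e₂ e₃) = 4 →
      ∃ ε, IsM ε ∧ normSq ε = 4 ∧ ∃ M, IsM M ∧ mk4 a b c d = ε + s2 • M := by
    intro e₀ e₁ e₂ e₃ h₀ h₁ h₂ h₃ hn
    have hdiv : ∀ x e : Zsqrtd 2, parity x = parity e → ∃ m, x - e = s2 * m := by
      intro x e hxe
      refine (even_re_iff _).1 (parity_eq_zero.1 ?_)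
      rw [map_sub, hxe, sub_self]
    obtain ⟨m₀, hm₀⟩ := hdiv _ _ h₀
    obtain ⟨m₁, hm₁⟩ := hdiv _ _ h₁
    obtain ⟨m₂, hm₂⟩ := hdiv _ _ h₂
    obtain ⟨m₃, hm₃⟩ := hdiv _ _ h₃
    refine ⟨_, ⟨e₀, e₁, e₂, e₃, rfl⟩, hn, _, ⟨m₀, m₁, m₂, m₃, rfl⟩, ?_⟩
    apply Quaternion.ext <;> simp [re_mk4, imI_mk4, imJ_mk4, imK_mk4]
    · linear_combination 2 * hm₀ + s2 * hm₁ + s2 * hm₂ + hm₃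
    · linear_combination s2 * hm₁ + hm₃
    · linear_combination s2 * hm₂ + hm₃
    · linear_combination hm₃
  rcases key _ _ _ _ h1 with h | h | h | h | h | h <;> obtain ⟨g₀, g₁, g₂, g₃⟩ := h
  · exact fin 1 0 0 0 (by simpa) (by simpa) (by simpa) (by simpa) (by rw [normSq_mk4]; ring)
  · exact fin 0 0 0 1 (by simpa) (by simpa) (by simpa) (by simpa) (by rw [normSq_mk4]; ring)
  · exact fin (-1) 0 0 1 (by simpa) (by simpa) (by simpa) (by simpa) (by rw [normSq_mk4]; ring)
  · exact fin 0 1 0 0 (by simpa) (by simpa) (by simpa) (by simpa) (by rw [normSq_mk4]; ring)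
  · exact fin 0 0 1 0 (by simpa) (by simpa) (by simpa) (by simpa) (by rw [normSq_mk4]; ring)
  · exact fin 0 1 (-1) 0 (by simpa) (by simpa) (by simpa) (by simpa) (by rw [normSq_mk4]; ring)

/-- An element of the maximal order with odd reduced norm in `ℤ[2√2]` is, up to a right unit,
a quaternion with coordinates in `ℤ[√2]`. -/
lemma exists_integral_associate {A : ℍ[Zsqrtd 2]} (hA : IsM A) {α : Zsqrtd 2}
    (h : normSq A = 4 * α) (hα : ¬ Even α.re) (hα0 : InR0 α) :
    ∃ ε A₀, IsM ε ∧ normSq ε = 4 ∧ A * star ε = (4 : Zsqrtd 2) • A₀ := by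
  obtain ⟨a, b, c, d, rfl⟩ := hA
  obtain ⟨ε, hε, hn, M, hM, hAM⟩ := exists_unit h hα
  obtain ⟨_, ⟨x, y, z, w, rfl⟩, hM'⟩ := hM.mul hε.star
  have hAe : mk4 a b c d * star ε = (4 : Zsqrtd 2) • 1 + (2 : Zsqrtd 2) • (s2 • mk4 x y z w) := by
    rw [hAM, add_mul, self_mul_star, hn, q_smul_mul, hM', q_smul_smul, q_smul_smul, mul_comm]
    congr 1
  have hns := congrArg normSq hAe
  rw [map_mul, normSq_star, h, hn, normSq_def'] at hns
  simp only [Quaternion.re_add, Quaternion.imI_add, Quaternion.imJ_add, Quaternion.imK_add,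
    Quaternion.re_smul, Quaternion.imI_smul, Quaternion.imJ_smul, Quaternion.imK_smul,
    Quaternion.re_one, Quaternion.imI_one, Quaternion.imJ_one, Quaternion.imK_one, smul_eq_mul,
    re_mk4, imI_mk4, imJ_mk4, imK_mk4] at hns
  -- `α = 1 + √2 w` modulo `2`
  obtain ⟨t, ht⟩ : ∃ t, α = 1 + s2 * w + 2 * t := by
    refine ⟨s2 * x + y + z + (x ^ 2 + y ^ 2 + z ^ 2 + w ^ 2 + s2 * x * y + s2 * x * z + x * w +
      y * z + s2 * y * w + s2 * z * w), ?_⟩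
    apply mul_left_cancel₀ (by decide : (16 : Zsqrtd 2) ≠ 0)
    have hs := s2_sq
    grind
  obtain ⟨w', rfl⟩ : ∃ w', w = s2 * w' := by
    refine (even_re_iff w).1 ?_
    have := congrArg Zsqrtd.im ht
    simp [s2] at this
    rw [InR0] at hα0
    rw [Int.even_iff] at hα0 ⊢
    omega
  refine ⟨ε, ⟨1 + s2 * x + y + z + w', y + w', z + w', w'⟩, hε, hn, ?_⟩
  rw [hAe]
  have hs := s2_sq
  apply Quaternion.ext
  · change (4 : Zsqrtd 2) * 1 + 2 * (s2 * (2 * x + s2 * y + s2 * z + s2 * w')) =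
      4 * (1 + s2 * x + y + z + w')
    grind
  · change (4 : Zsqrtd 2) * 0 + 2 * (s2 * (s2 * y + s2 * w')) = 4 * (y + w')
    grind
  · change (4 : Zsqrtd 2) * 0 + 2 * (s2 * (s2 * z + s2 * w')) = 4 * (z + w')
    grind
  · change (4 : Zsqrtd 2) * 0 + 2 * (s2 * (s2 * w')) = 4 * w'
    grind

lemma isM_two_smul (z : ℍ[Zsqrtd 2]) : IsM ((2 : Zsqrtd 2) • z) := by
  refine isM_of_parity rfl rfl rfl rfl ?_ ?_ ?_ ?_ <;>
    simp only [Quaternion.re_smul, Quaternion.imI_smul, Quaternion.imJ_smul,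
      Quaternion.imK_smul, smul_eq_mul, two_mul, Zsqrtd.re_add, Zsqrtd.im_add] <;>
    rw [Int.even_iff] <;> omega

/-- Factorisation among quaternions with coordinates in `ℤ[√2]`. -/
lemma exists_integral_factor {α γ : Zsqrtd 2} (hα : TP α) (hodd : ¬ Even α.re) (hα0 : InR0 α)
    {z : ℍ[Zsqrtd 2]} (hz : normSq z = α * γ) :
    ∃ A C : ℍ[Zsqrtd 2], normSq A = α ∧ normSq C = γ ∧ A * C = z := by
  obtain ⟨A, C, hA, hC, hAn, hAC⟩ := exists_left_factor hα (isM_two_smul z) (n := γ)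
    (by rw [normSq_smul, hz]; ring)
  obtain ⟨ε, A₀, hε, hεn, hA₀⟩ := exists_integral_associate hA hAn hodd hα0
  obtain ⟨C', hC', hεC⟩ := hε.mul hC
  have hA₀n : normSq A₀ = α := by
    have := congrArg normSq hA₀
    rw [map_mul, normSq_star, hAn, hεn, normSq_smul] at this
    apply mul_left_cancel₀ (by decide : (16 : Zsqrtd 2) ≠ 0)
    linear_combination -this
  have hAC' : A₀ * C' = (2 : Zsqrtd 2) • z := by
    have h8 : (8 : Zsqrtd 2) • (A₀ * C') = (8 : Zsqrtd 2) • ((2 : Zsqrtd 2) • z) := by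
      have h1 : (A * star ε) * (ε * C) = (16 : Zsqrtd 2) • z := by
        rw [mul_assoc, ← mul_assoc (star ε), star_mul_self, hεn, coe_mul_eq_smul, q_mul_smul,
          hAC, q_smul_smul, q_smul_smul]
        norm_num
      rw [hA₀, hεC, q_smul_mul, q_mul_smul, q_smul_smul] at h1
      rw [q_smul_smul, show (8 * 2 : Zsqrtd 2) = 16 by norm_num, ← h1]
      norm_num
    apply two_smul_cancel
    apply two_smul_cancel
    apply two_smul_cancel
    rw [q_smul_smul, q_smul_smul, show (2 * 2 * 2 : Zsqrtd 2) = 8 by norm_num, h8]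
    simp only [q_smul_smul]
    norm_num
  have hdvd : α • C' = (2 : Zsqrtd 2) • (star A₀ * z) := by
    rw [← q_mul_smul, ← hAC', ← mul_assoc, star_mul_self, hA₀n, coe_mul_eq_smul]
  obtain ⟨c₀, h₀⟩ := two_dvd_of_odd_mul hodd ⟨_, congrArg QuaternionAlgebra.re hdvd⟩
  obtain ⟨c₁, h₁⟩ := two_dvd_of_odd_mul hodd ⟨_, congrArg QuaternionAlgebra.imI hdvd⟩
  obtain ⟨c₂, h₂⟩ := two_dvd_of_odd_mul hodd ⟨_, congrArg QuaternionAlgebra.imJ hdvd⟩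
  obtain ⟨c₃, h₃⟩ := two_dvd_of_odd_mul hodd ⟨_, congrArg QuaternionAlgebra.imK hdvd⟩
  obtain ⟨C₀, rfl⟩ : ∃ C₀ : ℍ[Zsqrtd 2], C' = (2 : Zsqrtd 2) • C₀ :=
    ⟨⟨c₀, c₁, c₂, c₃⟩, Quaternion.ext _ _ h₀ h₁ h₂ h₃⟩
  have hfin : A₀ * C₀ = z := two_smul_cancel (by rw [← hAC', q_mul_smul])
  refine ⟨A₀, C₀, hA₀n, ?_, hfin⟩
  have := congrArg normSq hfin
  rw [map_mul, hA₀n, hz] at this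
  exact mul_left_cancel₀ hα.ne_zero this

/-- A positive semidefinite form with odd leading coefficient, whose diagonal coefficients lie in
`ℤ[2√2]`, is a sum of four squares of linear forms. -/
theorem four_squares {α β γ : Zsqrtd 2} (hα : TP α) (hodd : ¬ Even α.re) (hα0 : InR0 α)
    (hγ0 : InR0 γ) (hD : TN (α * γ - β ^ 2)) :
    ∃ a b : Fin 4 → Zsqrtd 2, α = ∑ i, a i ^ 2 ∧ β = ∑ i, a i * b i ∧ γ = ∑ i, b i ^ 2 := by
  obtain ⟨x, y, w, h⟩ := sum3_of_TN hD ((hα0.mul hγ0).sub (InR0_sq β))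
  obtain ⟨z, z0, z1, z2, z3⟩ : ∃ z : ℍ[Zsqrtd 2], z.re = β ∧ z.imI = x ∧ z.imJ = y ∧ z.imK = w :=
    ⟨⟨β, x, y, w⟩, rfl, rfl, rfl, rfl⟩
  obtain ⟨A, C, hA, hC, hAC⟩ := exists_integral_factor hα hodd hα0 (z := z) (γ := γ) (by
    rw [normSq_def', z0, z1, z2, z3]; linear_combination -h)
  refine ⟨![A.re, A.imI, A.imJ, A.imK], ![C.re, -C.imI, -C.imJ, -C.imK], ?_, ?_, ?_⟩
  · rw [← hA, normSq_def', Fin.sum_univ_four]; rfl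
  · rw [← z0, ← hAC, Quaternion.re_mul, Fin.sum_univ_four]; simp; ring
  · rw [← hC, normSq_def', Fin.sum_univ_four]; simp

end

/-! ### Five squares suffice -/

lemma TN_sum_sq {n : ℕ} (a : Fin n → Zsqrtd 2) : TN (∑ i, a i ^ 2) := by
  refine ⟨?_, ?_⟩ <;> rw [map_sum] <;>
    exact Finset.sum_nonneg fun i _ => by rw [map_pow]; exact sq_nonneg _

lemma InR0_sum_sq {n : ℕ} (a : Fin n → Zsqrtd 2) : InR0 (∑ i, a i ^ 2) := by
  induction n with
  | zero => simp [InR0]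
  | succ n ih => rw [Fin.sum_univ_succ]; exact (InR0_sq _).add (ih _)

lemma TN_disc {n : ℕ} (a b : Fin n → Zsqrtd 2) :
    TN ((∑ i, a i ^ 2) * (∑ i, b i ^ 2) - (∑ i, a i * b i) ^ 2) := by
  refine ⟨?_, ?_⟩ <;> simp only [map_sub, map_mul, map_pow, map_sum] <;>
    exact sub_nonneg.2 (Finset.sum_mul_sq_le_sq_mul_sq _ _ _)

/-- A form with a column `(a i, b i)` whose first entry is odd: either its leading coefficient is
odd and `four_squares` applies to it, or `four_squares` applies after subtracting the square of
that column. -/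
lemma five_of_odd {n : ℕ} (a b : Fin n → Zsqrtd 2) (i : Fin n) (hi : ¬ Even (a i).re) :
    ∃ a' b' : Fin 5 → Zsqrtd 2, ∑ i, a i ^ 2 = ∑ i, a' i ^ 2 ∧
      ∑ i, a i * b i = ∑ i, a' i * b' i ∧ ∑ i, b i ^ 2 = ∑ i, b' i ^ 2 := by
  have four : ∀ {m : ℕ} (c d : Fin m → Zsqrtd 2), ¬ Even (∑ i, c i ^ 2).re →
      ∃ a b : Fin 4 → Zsqrtd 2, ∑ i, c i ^ 2 = ∑ i, a i ^ 2 ∧ ∑ i, c i * d i = ∑ i, a i * b i ∧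
        ∑ i, d i ^ 2 = ∑ i, b i ^ 2 := by
    intro m c d hodd
    refine four_squares ((TN_sum_sq c).tp ?_) hodd (InR0_sum_sq c) (InR0_sum_sq d) (TN_disc c d)
    intro h0
    rw [h0] at hodd
    exact hodd (by decide)
  by_cases hα : Even (∑ i, a i ^ 2).re
  swap
  · obtain ⟨a', b', h1, h2, h3⟩ := four a b hα
    refine ⟨Fin.cons 0 a', Fin.cons 0 b', ?_, ?_, ?_⟩
    · rw [Fin.sum_univ_succ, h1]; simp
    · rw [Fin.sum_univ_succ, h2]; simp
    · rw [Fin.sum_univ_succ, h3]; simp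
  · obtain - | n := n
    · exact i.elim0
    rw [Fin.sum_univ_succAbove _ i] at hα
    obtain ⟨a', b', h1, h2, h3⟩ := four (fun j => a (i.succAbove j)) (fun j => b (i.succAbove j)) (by
      intro h
      rw [← parity_eq_zero] at h hα hi
      rw [map_add, h, add_zero, map_pow] at hα
      exact hi (pow_eq_zero_iff (by norm_num) |>.1 hα))
    refine ⟨Fin.cons (a i) a', Fin.cons (b i) b', ?_, ?_, ?_⟩
    · rw [Fin.sum_univ_succAbove _ i, Fin.sum_univ_succ, h1]; simp
    · rw [Fin.sum_univ_succAbove _ i, Fin.sum_univ_succ, h2]; simp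
    · rw [Fin.sum_univ_succAbove _ i, Fin.sum_univ_succ, h3]; simp

/-- Any sum of squares of linear forms is a sum of five, by induction on the sum of the rational
parts of the outer coefficients, which is halved when every linear form is divisible by `√2`. -/
lemma five_squares {n : ℕ} (a b : Fin n → Zsqrtd 2) :
    ∃ a' b' : Fin 5 → Zsqrtd 2, ∑ i, a i ^ 2 = ∑ i, a' i ^ 2 ∧
      ∑ i, a i * b i = ∑ i, a' i * b' i ∧ ∑ i, b i ^ 2 = ∑ i, b' i ^ 2 := by
  induction hk : ((∑ i, a i ^ 2).re + (∑ i, b i ^ 2).re).toNat using Nat.strong_induction_on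
    generalizing a b with
  | _ k ih =>
  by_cases ha : ∃ i, ¬ Even (a i).re
  · obtain ⟨i, hi⟩ := ha
    exact five_of_odd a b i hi
  by_cases hb : ∃ i, ¬ Even (b i).re
  · obtain ⟨i, hi⟩ := hb
    obtain ⟨a', b', h1, h2, h3⟩ := five_of_odd b a i hi
    refine ⟨b', a', h3, ?_, h1⟩
    simpa only [mul_comm] using h2
  push Not at ha hb
  have hTa := TN_sum_sq a
  have hTb := TN_sum_sq b
  by_cases h0 : ∑ i, a i ^ 2 = 0 ∧ ∑ i, b i ^ 2 = 0
  · have hD := TN_disc a b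
    rw [h0.1, h0.2] at hD ⊢
    refine ⟨0, 0, by simp, ?_, by simp⟩
    have : emb₁ (∑ i, a i * b i) = 0 := by
      have := hD.1
      rw [mul_zero, zero_sub, map_neg, map_pow] at this
      exact pow_eq_zero_iff (n := 2) (by norm_num) |>.1 (le_antisymm (by linarith) (sq_nonneg _))
    rw [emb₁_inj this]; simp
  · choose c hc using fun i => (even_re_iff (a i)).1 (ha i)
    choose d hd using fun i => (even_re_iff (b i)).1 (hb i)
    have e1 : ∑ i, a i ^ 2 = 2 * ∑ i, c i ^ 2 := by
      rw [Finset.mul_sum]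
      exact Finset.sum_congr rfl fun i _ => by rw [hc, ← s2_sq]; ring
    have e2 : ∑ i, a i * b i = 2 * ∑ i, c i * d i := by
      rw [Finset.mul_sum]
      exact Finset.sum_congr rfl fun i _ => by rw [hc, hd, ← s2_sq]; ring
    have e3 : ∑ i, b i ^ 2 = 2 * ∑ i, d i ^ 2 := by
      rw [Finset.mul_sum]
      exact Finset.sum_congr rfl fun i _ => by rw [hd, ← s2_sq]; ring
    have hre : ∀ {t : Zsqrtd 2}, TN t → 0 ≤ t.re ∧ (t ≠ 0 → 0 < t.re) := by
      intro t ht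
      by_cases h : t = 0
      · subst h; exact ⟨le_rfl, fun h => (h rfl).elim⟩
      · have := (ht.tp h).re_pos
        exact ⟨this.le, fun _ => this⟩
    have hpos : 0 < (∑ i, a i ^ 2).re + (∑ i, b i ^ 2).re := by
      obtain ⟨p1, p2⟩ := hre hTa
      obtain ⟨q1, q2⟩ := hre hTb
      rw [not_and_or] at h0
      rcases h0 with h | h
      · have := p2 h; omega
      · have := q2 h; omega
    have hre2 : ∀ t : Zsqrtd 2, (2 * t).re = 2 * t.re := by intro t; simp
    obtain ⟨a', b', h1, h2, h3⟩ := ih _ (by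
      rw [e1, e3, hre2, hre2] at hk hpos; omega) c d rfl
    refine ⟨fun i => s2 * a' i, fun i => s2 * b' i, ?_, ?_, ?_⟩
    · rw [e1, h1, Finset.mul_sum]
      exact Finset.sum_congr rfl fun i _ => by rw [← s2_sq]; ring
    · rw [e2, h2, Finset.mul_sum]
      exact Finset.sum_congr rfl fun i _ => by rw [← s2_sq]; ring
    · rw [e3, h3, Finset.mul_sum]
      exact Finset.sum_congr rfl fun i _ => by rw [← s2_sq]; ring

/-! ### A form that is not a sum of four squares -/

/-- The form with coefficients `4 + 2√2`, `2√2`, `8 + 2√2` has no representation by four squares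
in which `x` occurs with coefficients `1 + √2, 1, 0, 0`. -/
lemma no_rep_normalized {p q r t : Zsqrtd 2} (h : (1 + s2) * q + p = s2)
    (h' : q ^ 2 + p ^ 2 + r ^ 2 + t ^ 2 = ⟨8, 2⟩) : False := by
  obtain rfl : p = s2 - (1 + s2) * q := by linear_combination h
  obtain ⟨m, n⟩ := q
  obtain ⟨r₀, r₁⟩ := r
  obtain ⟨t₀, t₁⟩ := t
  have hre := congrArg Zsqrtd.re h'
  have him := congrArg Zsqrtd.im h'
  simp [pow_two, s2] at hre him
  obtain ⟨e, he⟩ := Int.even_mul_pred_self m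
  have hre4 : r₀ ^ 2 + t₀ ^ 2 + 2 * (r₁ ^ 2 + t₁ ^ 2) =
      6 - 8 * (e + n ^ 2) - 4 * (2 * m * n - n) := by linear_combination hre - 4 * he
  have him4 : 2 * (r₀ * r₁ + t₀ * t₁) =
      2 - 4 * (e + n ^ 2) - 4 * (2 * m * n - n) := by linear_combination him - 2 * he
  have key : ∀ a b c d : ZMod 4, a ^ 2 + c ^ 2 + 2 * (b ^ 2 + d ^ 2) = 2 →
      2 * (a * b + c * d) = 2 → False := by decide
  have four : (4 : ZMod 4) = 0 := by decide
  refine key r₀ r₁ t₀ t₁ ?_ ?_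
  · have := congrArg (Int.cast : ℤ → ZMod 4) hre4
    push_cast at this
    rw [this]
    linear_combination (1 - 2 * ((e : ZMod 4) + n ^ 2) - (2 * m * n - n)) * four
  · have := congrArg (Int.cast : ℤ → ZMod 4) him4
    push_cast at this
    rw [this]
    linear_combination (-((e : ZMod 4) + n ^ 2) - (2 * m * n - n)) * four

lemma re_sum_sq {a₀ a₁ a₂ a₃ : Zsqrtd 2} (h : a₀ ^ 2 + a₁ ^ 2 + a₂ ^ 2 + a₃ ^ 2 = ⟨4, 2⟩) :
    a₀.re ^ 2 + a₁.re ^ 2 + a₂.re ^ 2 + a₃.re ^ 2 +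
      2 * (a₀.im ^ 2 + a₁.im ^ 2 + a₂.im ^ 2 + a₃.im ^ 2) = 4 ∧
    a₀.re * a₀.im + a₁.re * a₁.im + a₂.re * a₂.im + a₃.re * a₃.im = 1 := by
  have hre := congrArg Zsqrtd.re h
  have him := congrArg Zsqrtd.im h
  simp [pow_two] at hre him
  constructor <;> linarith

/-- In a representation `4 + 2√2 = a₀² + a₁² + a₂² + a₃²` with `a₀ ∉ ℤ` and `a₁ ∉ ℤ√2`,
comparing rational parts forces `a₀ = ±(1 + √2)`, `a₁ = ±1` and `a₂ = a₃ = 0`. -/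
lemma no_rep_two {a₀ a₁ a₂ a₃ b₀ b₁ b₂ b₃ : Zsqrtd 2}
    (hα : a₀ ^ 2 + a₁ ^ 2 + a₂ ^ 2 + a₃ ^ 2 = ⟨4, 2⟩)
    (hβ : a₀ * b₀ + a₁ * b₁ + a₂ * b₂ + a₃ * b₃ = s2)
    (hγ : b₀ ^ 2 + b₁ ^ 2 + b₂ ^ 2 + b₃ ^ 2 = ⟨8, 2⟩)
    (h0 : a₀.im ≠ 0) (h1 : a₁.re ≠ 0) : False := by
  obtain ⟨hre, him⟩ := re_sum_sq hα
  have p0 : 0 < a₀.im ^ 2 := by positivity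
  have p1 : 0 < a₁.re ^ 2 := by positivity
  have n0 := sq_nonneg a₀.re
  have n1 := sq_nonneg a₁.im
  have n2 := sq_nonneg a₂.re
  have n3 := sq_nonneg a₂.im
  have n4 := sq_nonneg a₃.re
  have n5 := sq_nonneg a₃.im
  have z1 : a₁.im = 0 := pow_eq_zero_iff (n := 2) (by norm_num) |>.1 (by omega)
  have z2 : a₂.im = 0 := pow_eq_zero_iff (n := 2) (by norm_num) |>.1 (by omega)
  have z3 : a₃.im = 0 := pow_eq_zero_iff (n := 2) (by norm_num) |>.1 (by omega)
  rw [z1, z2, z3] at him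
  simp only [mul_zero, add_zero] at him
  have hp0 : 0 < a₀.re ^ 2 := by
    have : a₀.re ≠ 0 := by intro h; rw [h] at him; simp at him
    positivity
  have y2 : a₂.re = 0 := pow_eq_zero_iff (n := 2) (by norm_num) |>.1 (by omega)
  have y3 : a₃.re = 0 := pow_eq_zero_iff (n := 2) (by norm_num) |>.1 (by omega)
  have hx1 : a₁.re ^ 2 = 1 := by omega
  have ha2 : a₂ = 0 := Zsqrtd.ext y2 z2
  have ha3 : a₃ = 0 := Zsqrtd.ext y3 z3
  have c1 : a₁ = 1 ∨ a₁ = -1 := (mul_self_eq_one_iff.1 (by rw [← pow_two]; exact hx1)).imp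
    (fun h => Zsqrtd.ext h z1) (fun h => Zsqrtd.ext h z1)
  have c0 : a₀ = 1 + s2 ∨ a₀ = -(1 + s2) := (Int.mul_eq_one_iff_eq_one_or_neg_one.1 him).imp
    (fun h => Zsqrtd.ext h.1 h.2) (fun h => Zsqrtd.ext h.1 h.2)
  rw [ha2, ha3] at hβ
  rcases c0 with rfl | rfl <;> rcases c1 with rfl | rfl
  · exact no_rep_normalized (q := b₀) (p := b₁) (by linear_combination hβ) hγ
  · exact no_rep_normalized (q := b₀) (p := -b₁) (r := b₂) (t := b₃)
      (by linear_combination hβ) (by linear_combination hγ)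
  · exact no_rep_normalized (q := -b₀) (p := b₁) (r := b₂) (t := b₃)
      (by linear_combination hβ) (by linear_combination hγ)
  · exact no_rep_normalized (q := -b₀) (p := -b₁) (r := b₂) (t := b₃)
      (by linear_combination hβ) (by linear_combination hγ)

lemma no_rep_one {a₀ a₁ a₂ a₃ b₀ b₁ b₂ b₃ : Zsqrtd 2}
    (hα : a₀ ^ 2 + a₁ ^ 2 + a₂ ^ 2 + a₃ ^ 2 = ⟨4, 2⟩)
    (hβ : a₀ * b₀ + a₁ * b₁ + a₂ * b₂ + a₃ * b₃ = s2)
    (hγ : b₀ ^ 2 + b₁ ^ 2 + b₂ ^ 2 + b₃ ^ 2 = ⟨8, 2⟩) (h0 : a₀.im ≠ 0) : False := by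
  by_cases h1 : a₁.re = 0
  swap
  · exact no_rep_two hα hβ hγ h0 h1
  by_cases h2 : a₂.re = 0
  swap
  · exact no_rep_two (a₀ := a₀) (a₁ := a₂) (a₂ := a₁) (a₃ := a₃) (b₀ := b₀) (b₁ := b₂) (b₂ := b₁)
      (b₃ := b₃) (by rw [← hα]; ring) (by rw [← hβ]; ring) (by rw [← hγ]; ring) h0 h2
  by_cases h3 : a₃.re = 0
  swap
  · exact no_rep_two (a₀ := a₀) (a₁ := a₃) (a₂ := a₂) (a₃ := a₁) (b₀ := b₀) (b₁ := b₃) (b₂ := b₂)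
      (b₃ := b₁) (by rw [← hα]; ring) (by rw [← hβ]; ring) (by rw [← hγ]; ring) h0 h3
  obtain ⟨hre, him⟩ := re_sum_sq hα
  rw [h1, h2, h3] at hre him
  simp only [zero_mul, add_zero] at him
  have : a₀.re ^ 2 = 1 := by
    rcases Int.mul_eq_one_iff_eq_one_or_neg_one.1 him with h | h <;> rw [h.1] <;> norm_num
  omega

lemma not_four : ¬ ∃ a b : Fin 4 → Zsqrtd 2, (⟨4, 2⟩ : Zsqrtd 2) = ∑ i, a i ^ 2 ∧
    (⟨0, 2⟩ : Zsqrtd 2) = 2 * ∑ i, a i * b i ∧ (⟨8, 2⟩ : Zsqrtd 2) = ∑ i, b i ^ 2 := by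
  rintro ⟨a, b, hα, hβ, hγ⟩
  have hβ' : ∑ i, a i * b i = s2 := by
    apply mul_left_cancel₀ (by decide : (2 : Zsqrtd 2) ≠ 0)
    rw [← hβ]; decide
  rw [Fin.sum_univ_four] at hα hβ' hγ
  by_cases h0 : (a 0).im = 0
  swap
  · exact no_rep_one hα.symm hβ' hγ.symm h0
  by_cases h1 : (a 1).im = 0
  swap
  · exact no_rep_one (a₀ := a 1) (a₁ := a 0) (a₂ := a 2) (a₃ := a 3) (b₀ := b 1) (b₁ := b 0)
      (b₂ := b 2) (b₃ := b 3) (by rw [hα]; ring) (by rw [← hβ']; ring) (by rw [hγ]; ring) h1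
  by_cases h2 : (a 2).im = 0
  swap
  · exact no_rep_one (a₀ := a 2) (a₁ := a 1) (a₂ := a 0) (a₃ := a 3) (b₀ := b 2) (b₁ := b 1)
      (b₂ := b 0) (b₃ := b 3) (by rw [hα]; ring) (by rw [← hβ']; ring) (by rw [hγ]; ring) h2
  by_cases h3 : (a 3).im = 0
  swap
  · exact no_rep_one (a₀ := a 3) (a₁ := a 1) (a₂ := a 2) (a₃ := a 0) (b₀ := b 3) (b₁ := b 1)
      (b₂ := b 2) (b₃ := b 0) (by rw [hα]; ring) (by rw [← hβ']; ring) (by rw [hγ]; ring) h3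
  have := (re_sum_sq hα.symm).2
  rw [h0, h1, h2, h3] at this
  simp at this

/-- Let `R = ℤ[√2]`.  Then `g_R(2) = 5`: every binary quadratic form over
`R` that is a sum of finitely many squares of linear forms over `R` is a sum of `5` squares
of linear forms over `R`, and there exists a binary quadratic form over `R` that is a sum of
finitely many squares of linear forms over `R` but is not a sum of `4` squares of linear
forms over `R`. -/
theorem g_Zsqrt2_two_eq_five :
    (∀ α β γ : Zsqrtd 2, (∃ n : ℕ, IsSumOfLinSq n α β γ) → IsSumOfLinSq 5 α β γ) ∧
      (∃ α β γ : Zsqrtd 2, (∃ n : ℕ, IsSumOfLinSq n α β γ) ∧ ¬ IsSumOfLinSq 4 α β γ) := by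
  refine ⟨?_, ⟨4, 2⟩, ⟨0, 2⟩, ⟨8, 2⟩, ⟨5, ![1, 1 + s2, 0, 0, 0], ![-1, 1, 1 + s2, 1, s2], ?_⟩,
    not_four⟩
  · rintro α β γ ⟨n, a, b, rfl, rfl, rfl⟩
    obtain ⟨a', b', h1, h2, h3⟩ := five_squares a b
    exact ⟨a', b', h1, by rw [h2], h3⟩
  · refine ⟨?_, ?_, ?_⟩ <;> simp [Fin.sum_univ_five] <;> decide
end

section
/- Let R = ℤ[√2]. The binary quadratic form f(x,y) = (16 + 2√2)(x² + xy + y²) is a sum of 5 squares of linear forms over R (explicitly, f = ((1+√2)x + y)² + ((1+√2)y)² + (x+y)² + 3(2x+y)² + 8y², where 3(2x+y)² + 8y² is a sum of three squares of linear forms since 3 = 1+1+1 and 8 = 2²+2²), but f is not a sum of 4 squares of linear forms over R. -/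
/-- The parity obstruction, for vectors of residues in `{0, 1}`. Since `n² ≡ n` on such residues,
the two hypotheses on `p, q` (and likewise on `r, s`) are `|p|² + 2|q|² ≡ 0 [MOD 4]` and
`p·q ≡ 1 [MOD 2]`. They come before `r` and `s` in the statement so that the exhaustive check
discards most `p, q` at once. -/
theorem no_parity_pattern :
    ∀ p₀ p₁ p₂ p₃ q₀ q₁ q₂ q₃ : Fin 2,
      (p₀.val + p₁.val + p₂.val + p₃.val + 2 * (q₀.val + q₁.val + q₂.val + q₃.val)) % 4 = 0 →
      (p₀.val * q₀.val + p₁.val * q₁.val + p₂.val * q₂.val + p₃.val * q₃.val) % 2 = 1 →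
      ∀ r₀ r₁ r₂ r₃ s₀ s₁ s₂ s₃ : Fin 2,
      (r₀.val + r₁.val + r₂.val + r₃.val + 2 * (s₀.val + s₁.val + s₂.val + s₃.val)) % 4 = 0 →
      (r₀.val * s₀.val + r₁.val * s₁.val + r₂.val * s₂.val + r₃.val * s₃.val) % 2 = 1 →
      (p₀.val * r₀.val + p₁.val * r₁.val + p₂.val * r₂.val + p₃.val * r₃.val) % 2 = 0 →
      (p₀.val * s₀.val + p₁.val * s₁.val + p₂.val * s₂.val + p₃.val * s₃.val +
        (q₀.val * r₀.val + q₁.val * r₁.val + q₂.val * r₂.val + q₃.val * r₃.val)) % 2 ≠ 1 := by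
  decide +kernel

theorem exists_parity (n : ℤ) : ∃ (e : Fin 2) (k : ℤ), n = 2 * k + (e.val : ℤ) :=
  ⟨⟨(n % 2).toNat, by omega⟩, n / 2, by simp only; omega⟩

theorem fin_two_sq (e : Fin 2) : (e.val : ℤ) ^ 2 = e.val := by
  fin_cases e <;> rfl

theorem norm_residue {p q : Fin 4 → ℤ} {e f : Fin 4 → Fin 2} {k l : Fin 4 → ℤ}
    (hp : ∀ i, p i = 2 * k i + ((e i).val : ℤ)) (hq : ∀ i, q i = 2 * l i + ((f i).val : ℤ))
    (h : ∑ i, p i ^ 2 + 2 * ∑ i, q i ^ 2 = 16) :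
    ((e 0).val + (e 1).val + (e 2).val + (e 3).val +
      2 * ((f 0).val + (f 1).val + (f 2).val + (f 3).val)) % 4 = 0 := by
  have hsq (k : ℤ) (e : Fin 2) :
      (2 * k + (e.val : ℤ)) ^ 2 = 4 * (k ^ 2 + k * (e.val : ℤ)) + e.val := by
    linear_combination fin_two_sq e
  simp only [hp, hq, hsq, Fin.sum_univ_four] at h
  omega

theorem dot_residue {p q : Fin 4 → ℤ} {e f : Fin 4 → Fin 2} {k l : Fin 4 → ℤ}
    (hp : ∀ i, p i = 2 * k i + ((e i).val : ℤ)) (hq : ∀ i, q i = 2 * l i + ((f i).val : ℤ)) :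
    (∑ i, p i * q i) % 2 = (((e 0).val * (f 0).val + (e 1).val * (f 1).val +
      (e 2).val * (f 2).val + (e 3).val * (f 3).val : ℕ) : ℤ) % 2 := by
  have hmul (k l e f : ℤ) : (2 * k + e) * (2 * l + f) = 2 * (2 * k * l + k * f + e * l) + e * f := by
    ring
  simp only [hp, hq, hmul, Fin.sum_univ_four]
  push_cast
  omega

theorem no_int_solution (p q r s : Fin 4 → ℤ)
    (h₁ : ∑ i, p i ^ 2 + 2 * ∑ i, q i ^ 2 = 16) (h₂ : ∑ i, p i * q i = 1)
    (h₃ : ∑ i, r i ^ 2 + 2 * ∑ i, s i ^ 2 = 16) (h₄ : ∑ i, r i * s i = 1)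
    (h₅ : ∑ i, p i * r i + 2 * ∑ i, q i * s i = 8)
    (h₆ : ∑ i, p i * s i + ∑ i, q i * r i = 1) : False := by
  choose e k hp using fun i => exists_parity (p i)
  choose f l hq using fun i => exists_parity (q i)
  choose g m hr using fun i => exists_parity (r i)
  choose t n hs using fun i => exists_parity (s i)
  have d₂ := dot_residue hp hq
  have d₄ := dot_residue hr hs
  have d₅ := dot_residue hp hr
  have d₆ := dot_residue hp hs
  have d₇ := dot_residue hq hr
  refine no_parity_pattern _ _ _ _ _ _ _ _ (norm_residue hp hq h₁) ?_ _ _ _ _ _ _ _ _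
    (norm_residue hr hs h₃) ?_ ?_ ?_ <;> omega

theorem re_im_sum {n : ℕ} (a b : Fin n → Zsqrtd 2) :
    (∑ i, a i * b i).re = ∑ i, (a i).re * (b i).re + 2 * ∑ i, (a i).im * (b i).im ∧
    (∑ i, a i * b i).im = ∑ i, (a i).re * (b i).im + ∑ i, (a i).im * (b i).re := by
  induction n with
  | zero => simp
  | succ n ih =>
    obtain ⟨h₁, h₂⟩ := ih (fun i => a i.castSucc) (fun i => b i.castSucc)
    simp only [Fin.sum_univ_castSucc, Zsqrtd.re_add, Zsqrtd.im_add, Zsqrtd.re_mul, Zsqrtd.im_mul,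
      h₁, h₂]
    constructor <;> ring

/-- Let `R = ℤ[√2]`.  The binary quadratic form
`f(x,y) = (16 + 2√2)(x² + x y + y²)` is a sum of `5` squares of linear forms over `R`, but
`f` is not a sum of `4` squares of linear forms over `R`. -/
theorem f_sum_of_five_not_four :
    IsSumOfLinSq 5 ((16 + 2 * Zsqrtd.sqrtd : Zsqrtd 2)) (16 + 2 * Zsqrtd.sqrtd)
        (16 + 2 * Zsqrtd.sqrtd) ∧
      ¬ IsSumOfLinSq 4 ((16 + 2 * Zsqrtd.sqrtd : Zsqrtd 2)) (16 + 2 * Zsqrtd.sqrtd)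
        (16 + 2 * Zsqrtd.sqrtd) := by
  have hc : (16 + 2 * Zsqrtd.sqrtd : Zsqrtd 2) = ⟨16, 2⟩ := by decide
  rw [hc]
  constructor
  · exact ⟨![⟨1, 0⟩, ⟨1, 1⟩, ⟨2, 0⟩, ⟨2, 0⟩, ⟨2, 0⟩], ![⟨3, 0⟩, ⟨1, 0⟩, ⟨1, 1⟩, ⟨1, 0⟩, ⟨0, -1⟩],
      by decide, by decide, by decide⟩
  · rintro ⟨a, b, hα, hβ, hγ⟩
    simp only [sq] at hα hγ
    obtain ⟨a₁, a₂⟩ := re_im_sum a a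
    obtain ⟨b₁, b₂⟩ := re_im_sum b b
    obtain ⟨c₁, c₂⟩ := re_im_sum a b
    rw [← hα] at a₁ a₂
    rw [← hγ] at b₁ b₂
    have hβ₁ := congrArg Zsqrtd.re hβ
    have hβ₂ := congrArg Zsqrtd.im hβ
    simp only [Zsqrtd.re_mul, Zsqrtd.im_mul, Zsqrtd.re_ofNat, Zsqrtd.im_ofNat, c₁, c₂,
      Nat.cast_ofNat] at hβ₁ hβ₂
    simp only [mul_comm (Zsqrtd.im _) (Zsqrtd.re _)] at a₂ b₂
    refine no_int_solution (fun i => (a i).re) (fun i => (a i).im) (fun i => (b i).re)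
      (fun i => (b i).im) ?_ ?_ ?_ ?_ ?_ ?_ <;> (try simp only [sq]) <;> linarith
end
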